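/- arXiv:1304.6529 — 7 statements merged into one kernel-verified Lean document; each statement's English description precedes it below -/
import Mathlib

section
/- Let F ⊇ ℚ be a field extension of degree n with σ₁, …, σₙ the n distinct field monomorphisms F → ℂ. Let C₀ be a k×k matrix with entries in F and let C be the block-diagonal kn×kn matrix with diagonal blocks σ₁(C₀), σ₂(C₀), …, σₙ(C₀). Let E be a field extension of F which is Galois over ℚ, and let P be an invertible kn×kn matrix with entries in E satisfying σ(P) = P·(K_{σ⁻¹} ⊗ I_k) for all σ ∈ Gal(E/ℚ), where σ(P) denotes entrywise application of σ. Then the matrix P C P⁻¹ has all its entries in ℚ. -/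
open Matrix Module

/-- If `C` is block-diagonal with blocks `σᵢ(C₀)` and `P` satisfies the Galois-permutation
compatibility `σ(P) = P ⬝ (K_{σ⁻¹} ⊗ I_k)` for all `σ ∈ Gal(E/ℚ)`, then `P C P⁻¹` has all
entries in `ℚ`. -/
theorem conjugated_blockdiagonal_is_rational
    (k n : ℕ)
    (F : IntermediateField ℚ ℂ) [FiniteDimensional ℚ F]
    (hFdeg : finrank ℚ F = n)
    -- the `n` distinct monomorphisms `F → ℂ`
    (σ : Fin n → (F →+* ℂ))
    (hσinj : Function.Injective σ)
    (hσall : ∀ τ : F →+* ℂ, ∃ i, τ = σ i)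
    (C₀ : Matrix (Fin k) (Fin k) F)
    (E : IntermediateField ℚ ℂ) (hFE : F ≤ E) [IsGalois ℚ E]
    (P : Matrix (Fin k × Fin n) (Fin k × Fin n) E)
    (hP : IsUnit P)
    (hPgal : ∀ (τ : E ≃ₐ[ℚ] E) (π : Equiv.Perm (Fin n)),
      -- `π` is the permutation determined by `τ ∘ σᵢ = σ_{π(i)}`
      (∀ (i : Fin n) (x : F) (hx : σ i x ∈ E), ((τ ⟨σ i x, hx⟩ : E) : ℂ) = σ (π i) x) →
      -- `τ(P) = P ⬝ (K_{π⁻¹} ⊗ I_k)`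
      P.map (fun e : E => (τ e : E)) =
        P * Matrix.of (fun x y : Fin k × Fin n =>
          if x.1 = y.1 ∧ y.2 = π⁻¹ x.2 then (1 : E) else 0)) :
    ∀ p q : Fin k × Fin n,
      ∃ r : ℚ,
        ((P.map (fun e : E => (e : ℂ))) *
          blockDiagonal (fun i : Fin n => C₀.map (fun x : F => σ i x)) *
          (P.map (fun e : E => (e : ℂ)))⁻¹) p q = (r : ℂ) := by
  classical
  have hmem : ∀ i (x : F), σ i x ∈ E := by
    intro i x
    have hs := Normal.splits (inferInstance : Normal ℚ E) (⟨x, hFE x.2⟩ : E)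
    have hint : IsIntegral ℚ (⟨x, hFE x.2⟩ : E) := Normal.isIntegral inferInstance _
    have hmin : minpoly ℚ (⟨x, hFE x.2⟩ : E) = minpoly ℚ x := by
      have h1 := minpoly.algebraMap_eq (A := ℚ) (algebraMap E ℂ).injective (⟨x, hFE x.2⟩ : E)
      have h2 := minpoly.algebraMap_eq (A := ℚ) (algebraMap F ℂ).injective x
      rw [← h1, ← h2]; rfl
    have hroot : Polynomial.aeval (σ i x) (minpoly ℚ x) = 0 := by
      have := Polynomial.aeval_algHom_apply (σ i).toRatAlgHom x (minpoly ℚ x)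
      rw [minpoly.aeval, map_zero] at this
      exact this
    have hr := hs.mem_range_of_isRoot (i := algebraMap E ℂ) (Polynomial.map_ne_zero (minpoly.ne_zero hint)) (x := σ i x) (by
        rw [hmin, Polynomial.map_map, ← IsScalarTower.algebraMap_eq, Polynomial.IsRoot, Polynomial.eval_map_algebraMap]; exact hroot)
    obtain ⟨y, hy⟩ := hr
    rw [← hy]; exact y.2
  let s : Fin n → (F →+* E) := fun i => (σ i).codRestrict E.toSubfield.toSubring (hmem i)
  have hs : ∀ i x, ((s i x : E) : ℂ) = σ i x := fun i x => rfl
  let C : Matrix (Fin k × Fin n) (Fin k × Fin n) E := blockDiagonal (fun i => C₀.map (s i))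
  have hdet : IsUnit P.det := (Matrix.isUnit_iff_isUnit_det P).1 hP
  have hfix : ∀ τ : E ≃ₐ[ℚ] E, (P * C * P⁻¹).map τ = P * C * P⁻¹ := by
    intro τ
    have hex : ∀ i, ∃ j, (algebraMap E ℂ).comp ((τ : E →+* E).comp (s i)) = σ j :=
      fun i => hσall _
    choose f hf using hex
    have hfinj : Function.Injective f := by
      intro i j hij
      apply hσinj
      ext x
      have h := hf i
      rw [hij, ← hf j] at h
      have h2 := RingHom.congr_fun h x
      have h3 : s i x = s j x := τ.injective ((algebraMap E ℂ).injective h2)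
      rw [← hs, ← hs, h3]
    let π : Equiv.Perm (Fin n) := Equiv.ofBijective f (Finite.injective_iff_bijective.1 hfinj)
    have hπ : ∀ i x, τ (s i x) = s (π i) x := by
      intro i x
      apply Subtype.ext
      exact RingHom.congr_fun (hf i) x
    have hK := hPgal τ π (fun i x hx => congrArg Subtype.val (hπ i x))
    set K : Matrix (Fin k × Fin n) (Fin k × Fin n) E := Matrix.of (fun x y : Fin k × Fin n =>
          if x.1 = y.1 ∧ y.2 = π⁻¹ x.2 then (1 : E) else 0) with hKdef
    have hKC : K * C.map τ = C * K := by
      ext ⟨a, i⟩ ⟨b, j⟩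
      rw [Matrix.mul_apply, Matrix.mul_apply, Finset.sum_eq_single (a, π⁻¹ i),
        Finset.sum_eq_single (b, π j)]
      · by_cases h : π⁻¹ i = j
        · subst h
          simp [hKdef, C, blockDiagonal_apply, hπ]
        · have h' : ¬ i = π j := fun h' => h (by simp [h'])
          simp only [Equiv.Perm.inv_def] at h
          simp [hKdef, C, blockDiagonal_apply, h, h']
      · rintro ⟨c, l⟩ - hne
        have : ¬ (c = b ∧ j = π⁻¹ l) := by
          rintro ⟨rfl, rfl⟩; simp at hne
        simp only [hKdef, Matrix.of_apply, if_neg this, mul_zero]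
      · simp
      · rintro ⟨c, l⟩ - hne
        have : ¬ (a = c ∧ l = π⁻¹ i) := by
          rintro ⟨rfl, rfl⟩; simp at hne
        simp only [hKdef, Matrix.of_apply, if_neg this, zero_mul]
      · simp
    have e1 : (P * C * P⁻¹).map τ * P.map τ = P.map τ * C.map τ := by
      rw [← Matrix.map_mul, Matrix.nonsing_inv_mul_cancel_right _ _ hdet, Matrix.map_mul]
    have e2 : (P * C * P⁻¹) * P.map τ = P.map τ * C.map τ := by
      have hK' : P.map τ = P * K := hK
      rw [hK', Matrix.mul_assoc P K, hKC, ← Matrix.mul_assoc, Matrix.nonsing_inv_mul_cancel_right _ _ hdet, Matrix.mul_assoc]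
    have hu : IsUnit (P.map τ) := hP.map (τ : E →+* E).mapMatrix
    exact hu.mul_right_cancel (e1.trans e2.symm)
  have hcast : (P.map (fun e : E => (e : ℂ))) *
          blockDiagonal (fun i : Fin n => C₀.map (fun x : F => σ i x)) *
          (P.map (fun e : E => (e : ℂ)))⁻¹ = (P * C * P⁻¹).map (algebraMap E ℂ) := by
    have hCc : blockDiagonal (fun i : Fin n => C₀.map (fun x : F => σ i x)) = C.map (algebraMap E ℂ) := by
      rw [Matrix.blockDiagonal_map _ _ (map_zero _)]; rfl
    have hPi : (P.map (algebraMap E ℂ))⁻¹ = P⁻¹.map (algebraMap E ℂ) := by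
      apply Matrix.inv_eq_right_inv
      rw [← Matrix.map_mul, Matrix.mul_nonsing_inv _ hdet, Matrix.map_one _ (map_zero _) (map_one _)]
    rw [hCc, Matrix.map_mul, Matrix.map_mul, ← hPi]; rfl
  intro p q
  rw [hcast]
  have hb := (InfiniteGalois.mem_bot_iff_fixed (k := ℚ) ((P * C * P⁻¹) p q)).2
    (fun τ => congrFun (congrFun (hfix τ) p) q)
  obtain ⟨r, hr⟩ := IntermediateField.mem_bot.1 hb
  refine ⟨r, ?_⟩
  rw [Matrix.map_apply, ← hr]
  simp
end

section
/- Let G be a finite group and χ an irreducible real-valued character of G with Schur index m_ℚ(χ) = 2. Let K = ℚ(χ) ⊆ ℝ and let ρ : G → GL_{2n}(K) be a representation with character 2χ, acting on V = K^{2n}. Then the following are equivalent: (1) there exists a minimal splitting field F for χ with F ⊆ ℝ; (2) there exists a G-equivariant K-linear isomorphism f : K^{2n} → K^{2n} with f² = κ·Id for some κ ∈ K with κ > 0 and √κ ∉ K. -/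
open Matrix Module

/-- `χ` is afforded by an `F`-representation: there is a matrix representation of `G`
over `F` whose character is `χ`. -/
def Affords {G : Type*} [Group G] (F : IntermediateField ℚ ℂ) (χ : G → ℂ) : Prop :=
  ∃ (d : ℕ) (ρ : G →* Matrix (Fin d) (Fin d) F),
    ∀ g : G, (((ρ g).trace : F) : ℂ) = χ g


section RepLemmas
variable {k G : Type*} [Field k] [CharZero k] [Group G] [Fintype G]

theorem aux_maschke {V : Type*} [AddCommGroup V] [Module k V] (ρ : Representation k G V)
    (p : Submodule k V) (hp : ∀ g, ∀ v ∈ p, ρ g v ∈ p) :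
    ∃ q : Submodule k V, (∀ g, ∀ v ∈ q, ρ g v ∈ q) ∧ IsCompl p q := by
  have : NeZero (Nat.card G : k) := ⟨by exact_mod_cast Nat.card_pos.ne'⟩
  let P : Subrepresentation ρ := ⟨p, hp⟩
  obtain ⟨Q, hQ⟩ := exists_isCompl P
  refine ⟨Q.toSubmodule, fun g v hv => Q.apply_mem_toSubmodule g hv, ?_, ?_⟩
  · rw [disjoint_iff]
    exact congrArg Subrepresentation.toSubmodule hQ.disjoint.eq_bot
  · rw [codisjoint_iff]
    exact congrArg Subrepresentation.toSubmodule hQ.codisjoint.eq_top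

theorem aux_split_apply {V : Type*} [AddCommGroup V] [Module k V]
    (f : V →ₗ[k] V) (p q : Submodule k V) (hpq : IsCompl p q)
    (hp : ∀ v ∈ p, f v ∈ p) (hq : ∀ v ∈ q, f v ∈ q) (x : p × q) :
    Submodule.prodEquivOfIsCompl p q hpq (f.restrict hp x.1, f.restrict hq x.2) =
      f (Submodule.prodEquivOfIsCompl p q hpq x) := by
  simp [Submodule.coe_prodEquivOfIsCompl']

theorem aux_trace_split {V : Type*} [AddCommGroup V] [Module k V] [FiniteDimensional k V]
    (f : V →ₗ[k] V) (p q : Submodule k V) (hpq : IsCompl p q)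
    (hp : ∀ v ∈ p, f v ∈ p) (hq : ∀ v ∈ q, f v ∈ q) :
    LinearMap.trace k V f = LinearMap.trace k p (f.restrict hp) +
      LinearMap.trace k q (f.restrict hq) := by
  rw [← LinearMap.trace_prodMap', ← LinearMap.trace_conj' _ (Submodule.prodEquivOfIsCompl p q hpq)]
  congr 1
  ext v
  obtain ⟨x, rfl⟩ := (Submodule.prodEquivOfIsCompl p q hpq).surjective v
  rw [← aux_split_apply f p q hpq hp hq]
  simp [LinearEquiv.conj_apply]

universe u
theorem aux_iso (N : ℕ) : ∀ (V W : Type u) [AddCommGroup V] [Module k V] [FiniteDimensional k V]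
    [AddCommGroup W] [Module k W] [FiniteDimensional k W]
    (ρ : Representation k G V) (σ : Representation k G W), finrank k V ≤ N →
    (∀ g, LinearMap.trace k V (ρ g) = LinearMap.trace k W (σ g)) →
    ∃ e : V ≃ₗ[k] W, ∀ g v, e (ρ g v) = σ g (e v) := by
  induction N with
  | zero =>
    intro V W _ _ _ _ _ _ ρ σ hN h
    have h1 := h 1
    simp only [map_one, LinearMap.trace_one] at h1
    have h2 : finrank k V = finrank k W := by exact_mod_cast h1
    have h3 : finrank k V = 0 := by omega
    have := finrank_zero_iff.1 h3
    have := finrank_zero_iff.1 (h2 ▸ h3)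
    exact ⟨0, fun g v => Subsingleton.elim _ _⟩
  | succ N ih =>
    intro V W _ _ _ _ _ _ ρ σ hN h
    have h1 := h 1
    simp only [map_one, LinearMap.trace_one] at h1
    have h2 : finrank k V = finrank k W := by exact_mod_cast h1
    by_cases h3 : finrank k V = 0
    · have := finrank_zero_iff.1 h3
      have := finrank_zero_iff.1 (h2 ▸ h3)
      exact ⟨0, fun g v => Subsingleton.elim _ _⟩
    have hnt : Nontrivial V := nontrivial_of_finrank_pos (R := k) (by omega)
    have : Invertible (Nat.card G : k) :=
      invertibleOfNonzero (by exact_mod_cast Nat.card_pos.ne')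
    have hfr : finrank k (Representation.IntertwiningMap ρ ρ) =
        finrank k (Representation.IntertwiningMap ρ σ) := by
      have e1 := Representation.card_inv_mul_sum_char_mul_char_eq_finrank ρ ρ
      have e2 := Representation.card_inv_mul_sum_char_mul_char_eq_finrank ρ σ
      have : (finrank k (Representation.IntertwiningMap ρ ρ) : k) =
        finrank k (Representation.IntertwiningMap ρ σ) := by
        rw [← e1, ← e2]
        simp only [Representation.character, h]
      exact_mod_cast this
    obtain ⟨a, ha⟩ : ∃ a : Representation.IntertwiningMap ρ σ, a ≠ 0 := by
      by_contra! hcon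
      have hs : Subsingleton (Representation.IntertwiningMap ρ σ) :=
        ⟨fun x y => by rw [hcon x, hcon y]⟩
      rw [finrank_zero_of_subsingleton (M := Representation.IntertwiningMap ρ σ)] at hfr
      have hfin : Module.Finite k (Representation.IntertwiningMap ρ ρ) :=
        Module.Finite.equiv (Representation.invariantsEquivIntertwiningMap ρ ρ)
      have hs2 := finrank_zero_iff.1 hfr
      obtain ⟨v, hv⟩ := exists_ne (0 : V)
      have : (⟨LinearMap.id, fun g => by simp⟩ : Representation.IntertwiningMap ρ ρ) = 0 :=
        Subsingleton.elim _ _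
      exact hv congr($this v)
    have hcomm : ∀ g v, a.toLinearMap (ρ g v) = σ g (a.toLinearMap v) := a.isIntertwining
    have ha' : a.toLinearMap ≠ 0 := fun h0 => ha (Representation.IntertwiningMap.ext h0)
    generalize a.toLinearMap = b at hcomm ha'
    have hker : ∀ g, ∀ v ∈ LinearMap.ker b, ρ g v ∈ LinearMap.ker b := by
      intro g v hv
      rw [LinearMap.mem_ker] at *
      rw [hcomm, hv, map_zero]
    have hran : ∀ g, ∀ v ∈ LinearMap.range b, σ g v ∈ LinearMap.range b := by
      rintro g _ ⟨v, rfl⟩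
      exact ⟨ρ g v, hcomm g v⟩
    obtain ⟨C, hC, hkC⟩ := aux_maschke ρ _ hker
    obtain ⟨D, hD, hrD⟩ := aux_maschke σ _ hran
    obtain ⟨e1, he1⟩ : ∃ e : C ≃ₗ[k] LinearMap.range b, ∀ c : C, (e c : W) = b c :=
      ⟨LinearMap.kerComplementEquivRange b hkC.symm, fun c => rfl⟩
    let ρC := ρ.subrepresentation C hC
    let ρK := ρ.subrepresentation _ hker
    let σD := σ.subrepresentation D hD
    let σR := σ.subrepresentation _ hran
    have he1' : ∀ g c, e1 (ρC g c) = σR g (e1 c) := by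
      intro g c
      apply Subtype.ext
      rw [he1]
      change b (ρ g c) = σ g (e1 c)
      rw [hcomm, he1]
    have htr : ∀ g, LinearMap.trace k _ (ρK g) = LinearMap.trace k _ (σD g) := by
      intro g
      have t1 : LinearMap.trace k _ (ρ g) =
        LinearMap.trace k _ (ρK g) + LinearMap.trace k _ (ρC g) :=
        aux_trace_split (ρ g) _ _ hkC (hker g) (hC g)
      have t2 : LinearMap.trace k _ (σ g) =
        LinearMap.trace k _ (σR g) + LinearMap.trace k _ (σD g) :=
        aux_trace_split (σ g) _ _ hrD (hran g) (hD g)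
      have t3 : LinearMap.trace k _ (σR g) = LinearMap.trace k _ (ρC g) := by
        rw [← LinearMap.trace_conj' (ρC g) e1]
        congr 1
        ext x
        obtain ⟨c, rfl⟩ := e1.surjective x
        rw [← he1', LinearEquiv.conj_apply]
        simp
      have := h g
      rw [t1, t2, t3, add_comm] at this
      exact add_left_cancel this
    have hlt : finrank k (LinearMap.ker b) ≤ N := by
      have : finrank k (LinearMap.ker b) < finrank k V :=
        Submodule.finrank_lt (fun h0 => ha' (LinearMap.ker_eq_top.1 h0))
      omega
    obtain ⟨e2, he2⟩ := ih _ _ ρK σD hlt htr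
    let E := (Submodule.prodEquivOfIsCompl _ _ hkC).symm.trans
      (((LinearEquiv.prodCongr e2 e1).trans (LinearEquiv.prodComm k _ _)).trans
        (Submodule.prodEquivOfIsCompl _ _ hrD))
    refine ⟨E, fun g v => ?_⟩
    obtain ⟨x, rfl⟩ := (Submodule.prodEquivOfIsCompl _ _ hkC).surjective v
    have s1 := aux_split_apply (ρ g) _ _ hkC (hker g) (hC g) x
    have s2 := aux_split_apply (σ g) _ _ hrD (hran g) (hD g) (e1 x.2, e2 x.1)
    have s3 : E (Submodule.prodEquivOfIsCompl _ _ hkC x) =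
      Submodule.prodEquivOfIsCompl _ _ hrD (e1 x.2, e2 x.1) := by
      simp [E]
    rw [s3, ← s2, ← s1]
    have s4 : ∀ y, E (Submodule.prodEquivOfIsCompl _ _ hkC y) =
      Submodule.prodEquivOfIsCompl _ _ hrD (e1 y.2, e2 y.1) := by
      intro y; simp [E]
    rw [s4]
    congr 2
    · exact he1' g _
    · exact he2 g _

variable {ι κ : Type} [Fintype ι] [Fintype κ] [DecidableEq ι] [DecidableEq κ]

def aux_rep (ρ : G →* Matrix ι ι k) : Representation k G (ι → k) where
  toFun g := (ρ g).toLin'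
  map_one' := by simp; rfl
  map_mul' g h := by simp [Matrix.toLin'_mul]; rfl

/-- Matrix representations over a field of characteristic zero with equal characters are similar. -/
theorem aux_mat_iso (ρ : G →* Matrix ι ι k) (σ : G →* Matrix κ κ k)
    (h : ∀ g, (ρ g).trace = (σ g).trace) :
    ∃ (P : Matrix κ ι k) (Q : Matrix ι κ k), P * Q = 1 ∧ Q * P = 1 ∧
      ∀ g, P * ρ g = σ g * P := by
  obtain ⟨e, he⟩ := aux_iso (k := k) (G := G) _ (ι → k) (κ → k) (aux_rep ρ) (aux_rep σ) le_rfl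
    (fun g => by
      change LinearMap.trace k _ (ρ g).toLin' = LinearMap.trace k _ (σ g).toLin'
      simpa using h g)
  refine ⟨LinearMap.toMatrix' e.toLinearMap, LinearMap.toMatrix' e.symm.toLinearMap, ?_, ?_, ?_⟩
  · rw [← LinearMap.toMatrix'_comp]; simp
  · rw [← LinearMap.toMatrix'_comp]; simp
  · intro g
    have : e.toLinearMap ∘ₗ (ρ g).toLin' = (σ g).toLin' ∘ₗ e.toLinearMap := by
      apply LinearMap.ext; exact he g
    have := congrArg LinearMap.toMatrix' this
    simpa [LinearMap.toMatrix'_comp] using this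

/-- An idempotent commuting with the representation cuts out a subrepresentation. -/
theorem aux_cut (ρ : G →* Matrix ι ι k) (p : Matrix ι ι k) (hp : p * p = p)
    (hc : ∀ g, p * ρ g = ρ g * p) :
    ∃ (d : ℕ) (τ : G →* Matrix (Fin d) (Fin d) k), ∀ g, (τ g).trace = (ρ g * p).trace := by
  let R := LinearMap.range p.toLin'
  let b : Basis (Fin (finrank k R)) k R := finBasis k R
  let B := LinearMap.toMatrix b (Pi.basisFun k ι) R.subtype
  let C := LinearMap.toMatrix (Pi.basisFun k ι) b p.toLin'.rangeRestrict
  have hBC : B * C = p := by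
    rw [← LinearMap.toMatrix_comp]
    have : R.subtype ∘ₗ p.toLin'.rangeRestrict = p.toLin' := rfl
    rw [this]
    exact LinearMap.toMatrix'_toLin' p
  have hCB : C * B = 1 := by
    rw [← LinearMap.toMatrix_comp]
    have : p.toLin'.rangeRestrict ∘ₗ R.subtype = LinearMap.id := by
      apply LinearMap.ext
      rintro ⟨_, v, rfl⟩
      apply Subtype.ext
      simp [hp]
    rw [this, LinearMap.toMatrix_id]
  clear_value B C
  have hCp : C * p = C := by rw [← hBC, ← Matrix.mul_assoc, hCB, Matrix.one_mul]
  refine ⟨_, ⟨⟨fun g => C * ρ g * B, by simp [hCB]⟩, fun g h => ?_⟩, fun g => ?_⟩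
  · change C * ρ (g * h) * B = C * ρ g * B * (C * ρ h * B)
    calc C * ρ (g * h) * B = C * p * ρ (g * h) * B := by rw [hCp]
      _ = C * (p * ρ g) * ρ h * B := by rw [map_mul]; simp only [Matrix.mul_assoc]
      _ = C * (ρ g * (B * C)) * ρ h * B := by rw [hc, hBC]
      _ = _ := by simp only [Matrix.mul_assoc]
  · change (C * ρ g * B).trace = _
    rw [Matrix.mul_assoc, Matrix.trace_mul_comm, Matrix.mul_assoc, hBC]
end RepLemmas

section FieldLemmas

theorem aux_tfb {R ι κ : Type*} [AddCommMonoid R] [Fintype ι] [Fintype κ]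
    (A : Matrix ι ι R) (B : Matrix ι κ R) (C : Matrix κ ι R) (D : Matrix κ κ R) :
    (Matrix.fromBlocks A B C D).trace = A.trace + D.trace := by
  simp [Matrix.trace, Fintype.sum_sum_type]

/-- Schur for matrices. -/
theorem aux_schur {G : Type*} [Group G] {d : ℕ} (hd : d ≠ 0) (σ : G →* Matrix (Fin d) (Fin d) ℂ)
    (hirr : ∀ W : Submodule ℂ (Fin d → ℂ),
        (∀ g : G, ∀ v ∈ W, (σ g).mulVec v ∈ W) → W = ⊥ ∨ W = ⊤)
    (A : Matrix (Fin d) (Fin d) ℂ) (hA : ∀ g, A * σ g = σ g * A) : ∃ a : ℂ, A = a • 1 := by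
  have : Nonempty (Fin d) := ⟨⟨0, Nat.pos_of_ne_zero hd⟩⟩
  obtain ⟨a, ha⟩ := Module.End.exists_eigenvalue A.toLin'
  refine ⟨a, ?_⟩
  rcases hirr (Module.End.eigenspace A.toLin' a) (by
    intro g v hv
    rw [Module.End.mem_eigenspace_iff, Matrix.toLin'_apply] at *
    rw [Matrix.mulVec_mulVec, hA, ← Matrix.mulVec_mulVec, hv, Matrix.mulVec_smul]) with h | h
  · exact absurd h ha
  · apply Matrix.toLin'.injective
    apply LinearMap.ext
    intro v
    have : v ∈ Module.End.eigenspace A.toLin' a := h ▸ Submodule.mem_top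
    rw [Module.End.mem_eigenspace_iff] at this
    rw [this]
    simp

theorem aux_trace {G : Type*} [Group G] [Fintype G] {d : ℕ} (hd : d ≠ 0)
    (σ : G →* Matrix (Fin d) (Fin d) ℂ)
    (hirr : ∀ W : Submodule ℂ (Fin d → ℂ),
        (∀ g : G, ∀ v ∈ W, (σ g).mulVec v ∈ W) → W = ⊥ ∨ W = ⊤)
    {ι : Type} [Fintype ι] [DecidableEq ι] (ρ : G →* Matrix ι ι ℂ)
    (hρ : ∀ g, (ρ g).trace = 2 * (σ g).trace)
    (f : Matrix ι ι ℂ) (hf : ∀ g, f * ρ g = ρ g * f) (κ : ℂ) (hκ : f * f = κ • 1) :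
    (∀ g, (ρ g * f).trace = 0) ∨ ∃ a : ℂ, a * a = κ ∧ f.trace = 2 * d * a := by
  let σ2 : G →* Matrix (Fin d ⊕ Fin d) (Fin d ⊕ Fin d) ℂ :=
    ⟨⟨fun g => Matrix.fromBlocks (σ g) 0 0 (σ g), by simp⟩, fun g h => by
      simp [Matrix.fromBlocks_multiply]⟩
  have hσ2 : ∀ g, σ2 g = Matrix.fromBlocks (σ g) 0 0 (σ g) := fun g => rfl
  obtain ⟨P, Q, hPQ, hQP, hP⟩ := aux_mat_iso ρ σ2 (fun g => by
    rw [hρ, hσ2, aux_tfb]; ring)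
  have hQ : ∀ g, Q * σ2 g = ρ g * Q := by
    intro g
    calc Q * σ2 g = Q * (σ2 g * (P * Q)) := by rw [hPQ, Matrix.mul_one]
      _ = Q * (σ2 g * P) * Q := by simp only [Matrix.mul_assoc]
      _ = Q * P * ρ g * Q := by rw [← hP]; simp only [Matrix.mul_assoc]
      _ = _ := by rw [hQP, Matrix.one_mul]
  obtain ⟨f', hf'⟩ : ∃ f', f' = P * f * Q := ⟨_, rfl⟩
  have c1 : ∀ g, f' * σ2 g = σ2 g * f' := by
    intro g
    calc f' * σ2 g = P * f * (Q * σ2 g) := by rw [hf']; simp only [Matrix.mul_assoc]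
      _ = P * (f * ρ g) * Q := by rw [hQ]; simp only [Matrix.mul_assoc]
      _ = (P * ρ g) * f * Q := by rw [hf]; simp only [Matrix.mul_assoc]
      _ = _ := by rw [hP, hf']; simp only [Matrix.mul_assoc]
  have c2 : f' * f' = κ • 1 := by
    calc f' * f' = P * f * (Q * P) * f * Q := by rw [hf']; simp only [Matrix.mul_assoc]
      _ = P * (f * f) * Q := by rw [hQP, Matrix.mul_one]; simp only [Matrix.mul_assoc]
      _ = _ := by rw [hκ]; simp [hPQ]
  have c3 : ∀ g, (ρ g * f).trace = (σ2 g * f').trace := by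
    intro g
    calc (ρ g * f).trace = (ρ g * f * (Q * P)).trace := by rw [hQP, Matrix.mul_one]
      _ = (P * (ρ g * f * Q)).trace := by rw [← Matrix.mul_assoc, Matrix.trace_mul_comm]
      _ = (P * ρ g * f * Q).trace := by simp only [Matrix.mul_assoc]
      _ = _ := by rw [hP, hf']; simp only [Matrix.mul_assoc]
  have key : ∃ a b c e : ℂ, f' = Matrix.fromBlocks (a • 1) (b • 1) (c • 1) (e • 1) := by
    have hb := Matrix.fromBlocks_toBlocks f'
    rw [← hb] at c1
    simp only [hσ2, Matrix.fromBlocks_multiply, Matrix.fromBlocks_inj, Matrix.mul_zero,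
      Matrix.zero_mul, add_zero, zero_add] at c1
    obtain ⟨a, ha⟩ := aux_schur hd σ hirr _ (fun g => (c1 g).1)
    obtain ⟨b, hb'⟩ := aux_schur hd σ hirr _ (fun g => (c1 g).2.1)
    obtain ⟨c, hc⟩ := aux_schur hd σ hirr _ (fun g => (c1 g).2.2.1)
    obtain ⟨e, he⟩ := aux_schur hd σ hirr _ (fun g => (c1 g).2.2.2)
    exact ⟨a, b, c, e, by rw [← hb, ha, hb', hc, he]⟩
  obtain ⟨a, b, c, e, hfe⟩ := key
  have c4 : ∀ g, (ρ g * f).trace = (a + e) * (σ g).trace := by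
    intro g
    rw [c3, hσ2, hfe, Matrix.fromBlocks_multiply, aux_tfb]
    simp
    ring
  by_cases hae : a + e = 0
  · left; intro g; rw [c4, hae, zero_mul]
  right
  have i0 : Fin d := ⟨0, Nat.pos_of_ne_zero hd⟩
  rw [hfe, Matrix.fromBlocks_multiply] at c2
  have q1 := congrFun (congrFun c2 (Sum.inl i0)) (Sum.inl i0)
  have q2 := congrFun (congrFun c2 (Sum.inl i0)) (Sum.inr i0)
  have q3 := congrFun (congrFun c2 (Sum.inr i0)) (Sum.inr i0)
  simp at q1 q2 q3
  have hb0 : b = 0 := by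
    have : b * (a + e) = 0 := by linear_combination q2
    exact (mul_eq_zero.1 this).resolve_right hae
  subst hb0
  have hae2 : a = e := by
    have : (a - e) * (a + e) = 0 := by linear_combination q1 - q3
    exact sub_eq_zero.1 ((mul_eq_zero.1 this).resolve_right hae)
  subst hae2
  refine ⟨a, by linear_combination q1, ?_⟩
  have := c4 1
  simp at this
  rw [this]; ring

theorem aux_down {K F G : Type*} [Field K] [Field F] [CharZero F] [Group G] [Fintype G]
    (i : K →+* F) {ι : Type} [Fintype ι] [DecidableEq ι] (ρ : G →* Matrix ι ι K)
    (f : Matrix ι ι K) (hf : ∀ g, f * ρ g = ρ g * f) (κ : K) (hκ : f * f = κ • 1)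
    (s : F) (hs : s * s = i κ) (hs0 : s ≠ 0) (htr : ∀ g, (ρ g * f).trace = 0) :
    ∃ (d : ℕ) (τ : G →* Matrix (Fin d) (Fin d) F), ∀ g, 2 * (τ g).trace = i (ρ g).trace := by
  let ρF : G →* Matrix ι ι F := (i.mapMatrix : Matrix ι ι K →+* Matrix ι ι F).toMonoidHom.comp ρ
  have hρF : ∀ g, ρF g = i.mapMatrix (ρ g) := fun g => rfl
  have tr : ∀ A : Matrix ι ι K, (i.mapMatrix A).trace = i A.trace := fun A =>
    (AddMonoidHom.map_trace i A).symm
  have hff : i.mapMatrix f * i.mapMatrix f = (s * s) • 1 := by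
    rw [← map_mul, hκ, hs]
    ext x y
    by_cases h : x = y <;> simp [h]
  have hp : ((2 : F)⁻¹ • (1 + s⁻¹ • i.mapMatrix f)) * ((2 : F)⁻¹ • (1 + s⁻¹ • i.mapMatrix f)) =
      ((2 : F)⁻¹ • (1 + s⁻¹ • i.mapMatrix f)) := by
    have : (s⁻¹ • i.mapMatrix f) * (s⁻¹ • i.mapMatrix f) = 1 := by
      rw [smul_mul_smul_comm, hff, smul_smul, ← mul_inv, inv_mul_cancel₀ (mul_ne_zero hs0 hs0),
        one_smul]
    generalize s⁻¹ • i.mapMatrix f = X at *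
    rw [smul_mul_smul_comm, mul_add, add_mul, add_mul, this, one_mul, mul_one, one_mul]
    have : (1 + X + (X + 1)) = (2 : F) • (1 + X) := by rw [two_smul]; abel
    rw [this, smul_smul]
    congr 1
    norm_num
  obtain ⟨d, τ, hτ⟩ := aux_cut ρF _ hp (by
    intro g
    have : i.mapMatrix f * i.mapMatrix (ρ g) = i.mapMatrix (ρ g) * i.mapMatrix f := by
      rw [← map_mul, hf, map_mul]
    rw [hρF]
    simp [add_mul, mul_add, -RingHom.mapMatrix_apply, this])
  refine ⟨d, τ, fun g => ?_⟩
  rw [hτ, hρF, Matrix.mul_smul, Matrix.mul_add, Matrix.mul_one, Matrix.mul_smul, ← map_mul,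
    Matrix.trace_smul, Matrix.trace_add, Matrix.trace_smul, tr, tr, htr]
  simp

theorem aux_up {K F G : Type*} [Field K] [CharZero K] [Field F] [Group G] [Fintype G]
    (i : K →+* F) (κ : K) (hκ : κ ≠ 0) (s : F) (hs : s * s = i κ)
    (hex : ∀ x : F, ∃ a b : K, x = i a + s * i b)
    (huniq : ∀ a b : K, i a + s * i b = 0 → a = 0 ∧ b = 0)
    {d : ℕ} (τ : G →* Matrix (Fin d) (Fin d) F) (c : G → K) (hτ : ∀ g, (τ g).trace = i (c g))
    {ι : Type} [Fintype ι] [DecidableEq ι] (ρ : G →* Matrix ι ι K)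
    (hρ : ∀ g, (ρ g).trace = 2 * c g) :
    ∃ f : Matrix ι ι K, IsUnit f ∧ (∀ g, f * ρ g = ρ g * f) ∧ f * f = κ • 1 := by
  choose a b hab using hex
  have hu2 : ∀ a b a' b' : K, i a + s * i b = i a' + s * i b' → a = a' ∧ b = b' := by
    intro a b a' b' h
    have := huniq (a - a') (b - b') (by rw [map_sub, map_sub]; linear_combination h)
    exact ⟨sub_eq_zero.1 this.1, sub_eq_zero.1 this.2⟩
  let m : Matrix (Fin d) (Fin d) K →+* Matrix (Fin d) (Fin d) F := i.mapMatrix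
  have huM : ∀ A B A' B' : Matrix (Fin d) (Fin d) K, m A + s • m B = m A' + s • m B' →
      A = A' ∧ B = B' := by
    intro A B A' B' h
    have : ∀ x y, A x y = A' x y ∧ B x y = B' x y := by
      intro x y
      exact hu2 _ _ _ _ congr($h x y)
    exact ⟨by ext x y; exact (this x y).1, by ext x y; exact (this x y).2⟩
  let A : G → Matrix (Fin d) (Fin d) K := fun g => (τ g).map a
  let B : G → Matrix (Fin d) (Fin d) K := fun g => (τ g).map b
  have hAB : ∀ g, τ g = m (A g) + s • m (B g) := by
    intro g
    ext x y
    exact hab _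
  have h1 : A 1 = 1 ∧ B 1 = 0 := by
    apply huM
    rw [← hAB]
    simp
  have hmul : ∀ g h, A (g * h) = A g * A h + κ • (B g * B h) ∧
      B (g * h) = A g * B h + B g * A h := by
    intro g h
    apply huM
    rw [← hAB, map_mul, hAB g, hAB h]
    have : m (κ • (B g * B h)) = (s * s) • (m (B g) * m (B h)) := by
      rw [hs, ← map_mul]
      ext x y
      change i (κ * (B g * B h) x y) = i κ * i ((B g * B h) x y)
      rw [map_mul]
    simp only [map_add, map_mul, this, add_mul, mul_add, smul_mul_assoc, mul_smul_comm, smul_smul,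
      smul_add]
    abel
  let ρ' : G →* Matrix (Fin d ⊕ Fin d) (Fin d ⊕ Fin d) K :=
    ⟨⟨fun g => Matrix.fromBlocks (A g) (κ • B g) (B g) (A g), by simp [h1]⟩, fun g h => by
      simp only [Matrix.fromBlocks_multiply, hmul]
      congr 1
      · simp
      · simp [add_comm]
      · simp [add_comm]
      · simp [add_comm]⟩
  have hρ' : ∀ g, ρ' g = Matrix.fromBlocks (A g) (κ • B g) (B g) (A g) := fun g => rfl
  have tr : ∀ A : Matrix (Fin d) (Fin d) K, (m A).trace = i A.trace := fun A =>
    (AddMonoidHom.map_trace i A).symm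
  have htA : ∀ g, (A g).trace = c g := by
    intro g
    have := hτ g
    rw [hAB, Matrix.trace_add, Matrix.trace_smul, tr, tr, smul_eq_mul] at this
    exact (hu2 _ _ (c g) 0 (by rw [this]; simp)).1
  obtain ⟨P, Q, hPQ, hQP, hP⟩ := aux_mat_iso ρ' ρ (fun g => by
    rw [hρ, hρ', aux_tfb, htA]; ring)
  have hQ : ∀ g, Q * ρ g = ρ' g * Q := by
    intro g
    calc Q * ρ g = Q * (ρ g * (P * Q)) := by rw [hPQ, Matrix.mul_one]
      _ = Q * (ρ g * P) * Q := by simp only [Matrix.mul_assoc]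
      _ = Q * P * ρ' g * Q := by rw [← hP]; simp only [Matrix.mul_assoc]
      _ = _ := by rw [hQP, Matrix.one_mul]
  obtain ⟨f0, hf0⟩ : ∃ f0 : Matrix (Fin d ⊕ Fin d) (Fin d ⊕ Fin d) K,
    f0 = Matrix.fromBlocks 0 (κ • 1) 1 0 := ⟨_, rfl⟩
  have c1 : ∀ g, f0 * ρ' g = ρ' g * f0 := by
    intro g
    rw [hf0, hρ', Matrix.fromBlocks_multiply, Matrix.fromBlocks_multiply]
    simp
  have c2 : f0 * f0 = κ • 1 := by
    rw [hf0, Matrix.fromBlocks_multiply, ← Matrix.fromBlocks_one, Matrix.fromBlocks_smul]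
    simp
  have hff : (P * f0 * Q) * (P * f0 * Q) = κ • 1 := by
    calc (P * f0 * Q) * (P * f0 * Q) = P * f0 * (Q * P) * f0 * Q := by
          simp only [Matrix.mul_assoc]
      _ = P * (f0 * f0) * Q := by rw [hQP, Matrix.mul_one]; simp only [Matrix.mul_assoc]
      _ = _ := by rw [c2]; simp [hPQ]
  refine ⟨P * f0 * Q, ?_, ?_, hff⟩
  · refine ⟨⟨P * f0 * Q, κ⁻¹ • (P * f0 * Q), ?_, ?_⟩, rfl⟩
    · rw [mul_smul_comm, hff, smul_smul, inv_mul_cancel₀ hκ, one_smul]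
    · rw [smul_mul_assoc, hff, smul_smul, inv_mul_cancel₀ hκ, one_smul]
  · intro g
    calc P * f0 * Q * ρ g = P * f0 * (Q * ρ g) := by simp only [Matrix.mul_assoc]
      _ = P * (f0 * ρ' g) * Q := by rw [hQ]; simp only [Matrix.mul_assoc]
      _ = (P * ρ' g) * f0 * Q := by rw [c1]; simp only [Matrix.mul_assoc]
      _ = _ := by rw [hP]; simp only [Matrix.mul_assoc]

theorem aux_quad {K F : Type*} [Field K] [CharZero K] [Field F] [Algebra K F]
    (h : finrank K F = 2) : ∃ (κ : K) (s : F), s * s = algebraMap K F κ ∧ s ≠ 0 ∧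
      (¬ ∃ t : K, t * t = κ) ∧ (∀ x : F, ∃ a b : K, x = algebraMap K F a + s * algebraMap K F b) ∧
      (∀ a b : K, algebraMap K F a + s * algebraMap K F b = 0 → a = 0 ∧ b = 0) := by
  obtain ⟨x, hx⟩ : ∃ x : F, ∀ a : K, algebraMap K F a ≠ x := by
    by_contra! hcon
    have : finrank K F = 1 := by
      rw [finrank_eq_one_iff_of_nonzero' (1 : F) one_ne_zero]
      intro w
      obtain ⟨a, ha⟩ := hcon w
      exact ⟨a, by rw [← ha, Algebra.smul_def, mul_one]⟩
    omega
  have : FiniteDimensional K F := FiniteDimensional.of_finrank_pos (by omega)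
  have hindep : LinearIndependent K ![1, x] := by
    rw [LinearIndependent.pair_iff' one_ne_zero]
    intro a
    rw [Algebra.smul_def, mul_one]
    exact hx a
  have hspan := hindep.span_eq_top_of_card_eq_finrank' (by simp [h])
  have hrep : ∀ y : F, ∃ a b : K, y = algebraMap K F a + x * algebraMap K F b := by
    intro y
    have : y ∈ Submodule.span K (Set.range ![1, x]) := hspan ▸ Submodule.mem_top
    rw [Matrix.range_cons, Matrix.range_cons, Matrix.range_empty, Set.union_empty,
      Set.singleton_union, Submodule.mem_span_pair] at this
    obtain ⟨a, b, hab⟩ := this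
    exact ⟨a, b, by rw [← hab, Algebra.smul_def, Algebra.smul_def]; ring⟩
  obtain ⟨c, b, hcb⟩ := hrep (x * x)
  have h2 : algebraMap K F 2 ≠ 0 := by simp
  have hb2 : algebraMap K F (b / 2) * algebraMap K F 2 = algebraMap K F b := by
    rw [← map_mul]; congr 1; field_simp
  rw [map_ofNat] at hb2
  have hs : (x - algebraMap K F (b / 2)) * (x - algebraMap K F (b / 2)) =
      algebraMap K F (c + (b / 2) * (b / 2)) := by
    rw [map_add, map_mul]
    linear_combination hcb - x * hb2
  have hsK : ∀ a : K, algebraMap K F a ≠ x - algebraMap K F (b / 2) := by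
    intro a ha
    apply hx (a + b / 2)
    rw [map_add, ha]; ring
  refine ⟨c + (b / 2) * (b / 2), x - algebraMap K F (b / 2), hs, ?_, ?_, ?_, ?_⟩
  · intro h0
    exact hsK 0 (by rw [h0, map_zero])
  · rintro ⟨t, ht⟩
    rw [← ht, map_mul] at hs
    rcases mul_self_eq_mul_self_iff.1 hs with h | h
    · exact hsK t h.symm
    · exact hsK (-t) (by rw [h, map_neg])
  · intro y
    obtain ⟨u, v, huv⟩ := hrep y
    refine ⟨u + b / 2 * v, v, ?_⟩
    rw [huv, map_add, map_mul]; ring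
  · intro u v huv
    by_cases hv : v = 0
    · subst hv
      simpa using huv
    · exfalso
      apply hsK (-u / v)
      have hv' : algebraMap K F v ≠ 0 := by simpa using hv
      rw [map_div₀, map_neg, div_eq_iff hv']
      linear_combination -huv
end FieldLemmas

theorem aux_12 {G : Type*} [Group G] [Fintype G] (χ : G → ℂ) (K : IntermediateField ℚ ℂ)
    (hχ : ∀ g, χ g ∈ K) (n : ℕ)
    (ρ : G →* Matrix (Fin (2 * n)) (Fin (2 * n)) K)
    (hρ : ∀ g : G, (((ρ g).trace : K) : ℂ) = 2 * χ g)
    (F : IntermediateField ℚ ℂ) (hKF : K ≤ F) (hFr : ∀ x : F, ∃ r : ℝ, (x : ℂ) = (r : ℂ))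
    (hfd : FiniteDimensional ℚ F) (hfr : finrank ℚ F = 2 * finrank ℚ K) (haff : Affords F χ) :
    (∃ (f : Matrix (Fin (2 * n)) (Fin (2 * n)) K)
        (κ : K),
        IsUnit f ∧
        (∀ g : G, f * ρ g = ρ g * f) ∧
        f * f = κ • (1 : Matrix (Fin (2 * n)) (Fin (2 * n)) K) ∧
        (∃ r : ℝ, 0 < r ∧ (κ : ℂ) = (r : ℂ)) ∧
        ¬ ∃ s : K, s * s = κ) := by
  let i : K →+* F := (IntermediateField.inclusion hKF).toRingHom
  have hi : ∀ x : K, ((i x : F) : ℂ) = (x : ℂ) := fun x => rfl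
  let _ : Algebra K F := i.toAlgebra
  have hst : IsScalarTower ℚ K F := IsScalarTower.of_algebraMap_eq (fun x => by
    apply Subtype.ext
    simp [RingHom.algebraMap_toAlgebra])
  have hmul : finrank ℚ K * finrank K F = finrank ℚ F := Module.finrank_mul_finrank ℚ K F
  have hpos : 0 < finrank ℚ F := Module.finrank_pos
  have h2 : finrank K F = 2 := by
    rw [hfr, mul_comm] at hmul
    have : finrank ℚ K ≠ 0 := by intro h; omega
    exact Nat.eq_of_mul_eq_mul_right (Nat.pos_of_ne_zero this) hmul
  obtain ⟨κ, s, hs, hs0, hns, hex, huniq⟩ := aux_quad h2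
  obtain ⟨d, τ, hτ⟩ := haff
  have hκ0 : κ ≠ 0 := by
    rintro rfl
    exact hns ⟨0, by simp⟩
  obtain ⟨f, hu, hc, hff⟩ := aux_up i κ hκ0 s hs hex huniq τ (fun g => ⟨χ g, hχ g⟩)
    (fun g => by apply Subtype.ext; rw [hτ, hi]) ρ
    (fun g => by apply Subtype.ext; rw [hρ]; rfl)
  refine ⟨f, κ, hu, hc, hff, ?_, hns⟩
  obtain ⟨r, hr⟩ := hFr s
  have hsκ : (s : ℂ) * (s : ℂ) = (κ : ℂ) := congrArg Subtype.val hs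
  refine ⟨r * r, ?_, ?_⟩
  · have : r ≠ 0 := by
      rintro rfl
      apply hs0
      apply Subtype.ext
      rw [hr]; simp
    exact mul_self_pos.2 this
  · rw [← hsκ, hr]; push_cast; rfl

theorem aux_21 {G : Type*} [Group G] [Fintype G] (χ : G → ℂ) (K : IntermediateField ℚ ℂ)
    (hχirr : ∃ (d : ℕ) (ρ : G →* Matrix (Fin d) (Fin d) ℂ),
      (∀ g : G, (ρ g).trace = χ g) ∧
      (∀ W : Submodule ℂ (Fin d → ℂ),
        (∀ g : G, ∀ v ∈ W, (ρ g).mulVec v ∈ W) → W = ⊥ ∨ W = ⊤))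
    (hSchur1 : ¬ Affords K χ) (hfin : FiniteDimensional ℚ K)
    (hKr : ∀ x : K, ∃ r : ℝ, (x : ℂ) = (r : ℂ)) (n : ℕ)
    (ρ : G →* Matrix (Fin (2 * n)) (Fin (2 * n)) K)
    (hρ : ∀ g : G, (((ρ g).trace : K) : ℂ) = 2 * χ g)
    (f : Matrix (Fin (2 * n)) (Fin (2 * n)) K) (κ : K)
    (hc : ∀ g : G, f * ρ g = ρ g * f)
    (hff : f * f = κ • (1 : Matrix (Fin (2 * n)) (Fin (2 * n)) K))
    (r : ℝ) (hr : 0 < r) (hκr : (κ : ℂ) = (r : ℂ)) (hns : ¬ ∃ s : K, s * s = κ) :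
    (∃ F : IntermediateField ℚ ℂ,
        K ≤ F ∧
        (∀ x : F, ∃ r : ℝ, (x : ℂ) = (r : ℂ)) ∧
        FiniteDimensional ℚ F ∧
        finrank ℚ F = 2 * finrank ℚ K ∧
        Affords F χ) := by
  obtain ⟨d, σ, hσ, hirr⟩ := hχirr
  have hd : d ≠ 0 := by
    rintro rfl
    apply hSchur1
    refine ⟨0, 1, fun g => ?_⟩
    rw [← hσ]
    simp [Matrix.trace]
  let j : K →+* ℂ := algebraMap K ℂ
  have hj : ∀ x : K, j x = (x : ℂ) := fun x => rfl
  let m : Matrix (Fin (2 * n)) (Fin (2 * n)) K →+* Matrix (Fin (2 * n)) (Fin (2 * n)) ℂ :=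
    j.mapMatrix
  have tr : ∀ A, (m A).trace = j A.trace := fun A => (AddMonoidHom.map_trace j A).symm
  have htr : ∀ g, (ρ g * f).trace = 0 := by
    rcases aux_trace hd σ hirr (m.toMonoidHom.comp ρ)
      (fun g => by
        change (m (ρ g)).trace = _
        rw [tr, hj, hρ, hσ]) (m f)
      (fun g => by
        change m f * m (ρ g) = m (ρ g) * m f
        rw [← map_mul, hc, map_mul]) (κ : ℂ)
      (by
        rw [← map_mul, hff]
        ext x y
        by_cases h : x = y <;> simp [h, m, hj]) with h | ⟨a, ha, hta⟩
    · intro g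
      have := h g
      change (m (ρ g) * m f).trace = 0 at this
      rw [← map_mul, tr] at this
      exact (map_eq_zero j).1 this
    · exfalso
      apply hns
      rw [tr, hj] at hta
      have hd' : (d : ℂ) ≠ 0 := by exact_mod_cast hd
      have hav : a = ((f.trace / (2 * (d : K)) : K) : ℂ) := by
        have e : ((f.trace / (2 * (d : K)) : K) : ℂ) = (f.trace : ℂ) / (2 * (d : ℂ)) := by
          rw [← hj, map_div₀, map_mul, map_ofNat, map_natCast, hj]
        rw [e, hta]; field_simp
      refine ⟨f.trace / (2 * (d : K)), Subtype.ext ?_⟩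
      rw [← ha, hav]; rfl
  let s : ℂ := (Real.sqrt r : ℂ)
  have hss : s * s = (κ : ℂ) := by
    rw [hκr]
    change (Real.sqrt r : ℂ) * (Real.sqrt r : ℂ) = _
    rw [← Complex.ofReal_mul, Real.mul_self_sqrt hr.le]
  have hs0 : s ≠ 0 := by
    intro h
    rw [h, hκr, mul_zero] at hss
    exact hr.ne (by exact_mod_cast hss)
  let L : IntermediateField K ℂ := IntermediateField.adjoin K {s}
  let F : IntermediateField ℚ ℂ := L.restrictScalars ℚ
  have hKF : K ≤ F := by
    intro x hx
    exact L.algebraMap_mem ⟨x, hx⟩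
  have hsF : s ∈ F := IntermediateField.mem_adjoin_simple_self K s
  have hmonic : (Polynomial.X ^ 2 - Polynomial.C κ : Polynomial K).Monic :=
    Polynomial.monic_X_pow_sub_C κ two_ne_zero
  have hroot : Polynomial.aeval s (Polynomial.X ^ 2 - Polynomial.C κ : Polynomial K) = 0 := by
    simp only [map_sub, map_pow, Polynomial.aeval_X, Polynomial.aeval_C]
    rw [pow_two, hss]
    exact sub_self _
  have hint : IsIntegral K s := ⟨_, hmonic, hroot⟩
  have hirrp : Irreducible (Polynomial.X ^ 2 - Polynomial.C κ : Polynomial K) := by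
    rw [Polynomial.Monic.irreducible_iff_roots_eq_zero_of_degree_le_three hmonic
      (by rw [Polynomial.natDegree_X_pow_sub_C]) (by rw [Polynomial.natDegree_X_pow_sub_C]; simp)]
    rw [Multiset.eq_zero_iff_forall_notMem]
    intro t ht
    rw [Polynomial.mem_roots hmonic.ne_zero] at ht
    apply hns
    refine ⟨t, ?_⟩
    have : t ^ 2 - κ = 0 := by simpa using ht
    rw [← pow_two]; exact sub_eq_zero.1 this
  have hdeg : finrank K L = 2 := by
    rw [IntermediateField.adjoin.finrank hint, ← minpoly.eq_of_irreducible_of_monic hirrp hroot hmonic,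
      Polynomial.natDegree_X_pow_sub_C]
  have hLfin : FiniteDimensional K L := FiniteDimensional.of_finrank_pos (by omega)
  have hmul : finrank ℚ K * finrank K L = finrank ℚ L := Module.finrank_mul_finrank ℚ K L
  have hFfin : FiniteDimensional ℚ L := FiniteDimensional.trans ℚ K L
  refine ⟨F, hKF, ?_, hFfin, ?_, ?_⟩
  · let R : IntermediateField K ℂ :=
      { carrier := {z | ∃ r : ℝ, z = (r : ℂ)}
        mul_mem' := by
          rintro _ _ ⟨a, rfl⟩ ⟨b, rfl⟩
          exact ⟨a * b, by push_cast; rfl⟩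
        add_mem' := by
          rintro _ _ ⟨a, rfl⟩ ⟨b, rfl⟩
          exact ⟨a + b, by push_cast; rfl⟩
        algebraMap_mem' := fun x => hKr x
        inv_mem' := by
          rintro _ ⟨a, rfl⟩
          exact ⟨a⁻¹, by push_cast; rfl⟩ }
    have hLR : L ≤ R := by
      apply IntermediateField.adjoin_le_iff.2
      rintro _ rfl
      exact ⟨Real.sqrt r, rfl⟩
    intro x
    exact hLR x.2
  · change finrank ℚ L = _
    rw [← hmul, hdeg, mul_comm]
  · let i : K →+* F := (IntermediateField.inclusion hKF).toRingHom
    have hi : ∀ x : K, ((i x : F) : ℂ) = (x : ℂ) := fun x => rfl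
    obtain ⟨e, τ, hτ⟩ := aux_down i ρ f hc κ hff ⟨s, hsF⟩ (Subtype.ext hss)
      (fun h => hs0 (congrArg Subtype.val h)) htr
    refine ⟨e, τ, fun g => ?_⟩
    have := congrArg (Subtype.val : F → ℂ) (hτ g)
    rw [hi, hρ] at this
    have h2 : (2 : ℂ) * (((τ g).trace : F) : ℂ) = 2 * χ g := this
    exact mul_left_cancel₀ two_ne_zero h2

set_option synthInstance.maxHeartbeats 1000000 in
/-- For a real-valued irreducible character `χ` with Schur index `m_ℚ(χ) = 2`, and a
representation `ρ` over `K = ℚ(χ)` with character `2χ`, the existence of a real minimal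
splitting field is equivalent to the existence of a `G`-equivariant isomorphism `f`
with `f² = κ·Id`, `κ > 0` and `√κ ∉ K`. -/
theorem real_minimal_splitting_field_iff
    {G : Type*} [Group G] [Fintype G] (χ : G → ℂ)
    -- `χ` is an irreducible complex character
    (hχirr : ∃ (d : ℕ) (ρ : G →* Matrix (Fin d) (Fin d) ℂ),
      (∀ g : G, (ρ g).trace = χ g) ∧
      (∀ W : Submodule ℂ (Fin d → ℂ),
        (∀ g : G, ∀ v ∈ W, (ρ g).mulVec v ∈ W) → W = ⊥ ∨ W = ⊤))
    -- `χ` is real valued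
    (hreal : ∀ g : G, ∃ r : ℝ, χ g = (r : ℂ))
    -- the Schur index of `χ` over `ℚ` is `2`:
    -- `K = ℚ(χ)` does not afford `χ`, but some extension of degree `2` over `K` does
    (hSchur1 : ¬ Affords (IntermediateField.adjoin ℚ (Set.range χ)) χ)
    (hSchur2 : ∃ F : IntermediateField ℚ ℂ,
      IntermediateField.adjoin ℚ (Set.range χ) ≤ F ∧ FiniteDimensional ℚ F ∧
      finrank ℚ F = 2 * finrank ℚ (IntermediateField.adjoin ℚ (Set.range χ)) ∧
      Affords F χ)
    (n : ℕ)
    (ρ : G →* Matrix (Fin (2 * n)) (Fin (2 * n)) (IntermediateField.adjoin ℚ (Set.range χ)))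
    -- `ρ` has character `2χ`
    (hρ : ∀ g : G, (((ρ g).trace : IntermediateField.adjoin ℚ (Set.range χ)) : ℂ) = 2 * χ g) :
    -- (1) there is a minimal splitting field `F ⊆ ℝ`
    (∃ F : IntermediateField ℚ ℂ,
        IntermediateField.adjoin ℚ (Set.range χ) ≤ F ∧
        (∀ x : F, ∃ r : ℝ, (x : ℂ) = (r : ℂ)) ∧
        FiniteDimensional ℚ F ∧
        finrank ℚ F = 2 * finrank ℚ (IntermediateField.adjoin ℚ (Set.range χ)) ∧
        Affords F χ) ↔
    -- (2) there is a `G`-equivariant `K`-linear isomorphism `f` with `f² = κ·Id`,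
    -- `κ > 0` and `√κ ∉ K`
    (∃ (f : Matrix (Fin (2 * n)) (Fin (2 * n)) (IntermediateField.adjoin ℚ (Set.range χ)))
        (κ : IntermediateField.adjoin ℚ (Set.range χ)),
        IsUnit f ∧
        (∀ g : G, f * ρ g = ρ g * f) ∧
        f * f = κ • (1 : Matrix (Fin (2 * n)) (Fin (2 * n))
          (IntermediateField.adjoin ℚ (Set.range χ))) ∧
        (∃ r : ℝ, 0 < r ∧ (κ : ℂ) = (r : ℂ)) ∧
        ¬ ∃ s : IntermediateField.adjoin ℚ (Set.range χ), s * s = κ) := by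
  have hχ : ∀ g, χ g ∈ IntermediateField.adjoin ℚ (Set.range χ) := fun g =>
    IntermediateField.subset_adjoin ℚ _ ⟨g, rfl⟩
  constructor
  · rintro ⟨F, hKF, hFr, hfd, hfr, haff⟩
    exact aux_12 χ _ hχ n ρ hρ F hKF hFr hfd hfr haff
  · rintro ⟨f, κ, -, hc, hff, ⟨r, hr, hκr⟩, hns⟩
    obtain ⟨F, hKF, hfd, -, -⟩ := hSchur2
    have hfin : FiniteDimensional ℚ (IntermediateField.adjoin ℚ (Set.range χ)) :=
      FiniteDimensional.of_injective (IntermediateField.inclusion hKF).toLinearMap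
        (IntermediateField.inclusion hKF).injective
    refine aux_21 χ _ hχirr hSchur1 hfin ?_ n ρ hρ f κ hc hff r hr hκr hns
    let R : IntermediateField ℚ ℂ := (Complex.ofRealAm.restrictScalars ℚ).fieldRange
    have hKR : IntermediateField.adjoin ℚ (Set.range χ) ≤ R := by
      apply IntermediateField.adjoin_le_iff.2
      rintro _ ⟨g, rfl⟩
      obtain ⟨r, hr⟩ := hreal g
      exact ⟨r, hr.symm⟩
    intro x
    obtain ⟨r, hr⟩ := hKR x.2
    exact ⟨r, hr.symm⟩
end

section
/- Let G be a finite group and χ an irreducible complex character of G which is afforded by a real representation. Then there exists a minimal splitting field F for χ with F ⊆ ℝ; that is, there exists a subfield F of ℝ containing ℚ(χ) with [F : ℚ(χ)] = m_ℚ(χ) such that χ is afforded by an F-representation. -/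
open Matrix Module

namespace RMSF

def Spans {G : Type*} [Group G] {E : Type*} [Field E] {d : ℕ}
    (ρ : G →* Matrix (Fin d) (Fin d) E) : Prop :=
  ∀ Z : Matrix (Fin d) (Fin d) E, (∀ g, (Z * ρ g).trace = 0) → Z = 0

noncomputable def lft {G : Type*} [Group G] {E : Type*} [Field E] {d : ℕ}
    (ρ : G →* Matrix (Fin d) (Fin d) E) : MonoidAlgebra E G →ₐ[E] Matrix (Fin d) (Fin d) E :=
  MonoidAlgebra.lift E _ G ρ

lemma lft_of {G : Type*} [Group G] {E : Type*} [Field E] {d : ℕ}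
    (ρ : G →* Matrix (Fin d) (Fin d) E) (g : G) : lft ρ (MonoidAlgebra.of E G g) = ρ g := by
  simp [lft]

lemma lft_sum {G : Type*} [Group G] [Fintype G] {E : Type*} [Field E] {d : ℕ}
    (ρ : G →* Matrix (Fin d) (Fin d) E) (x : MonoidAlgebra E G) :
    lft ρ x = ∑ g, x.coeff g • ρ g := by
  rw [lft, MonoidAlgebra.lift_apply]
  exact Finsupp.sum_fintype _ _ (by simp)

lemma trace_lft_eq {G : Type*} [Group G] {E : Type*} [Field E] {d d' : ℕ}
    (ρ : G →* Matrix (Fin d) (Fin d) E) (σ : G →* Matrix (Fin d') (Fin d') E)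
    (h : ∀ g, (ρ g).trace = (σ g).trace) (x : MonoidAlgebra E G) :
    (lft ρ x).trace = (lft σ x).trace := by
  induction x using MonoidAlgebra.induction_on with
  | of g => rw [lft_of, lft_of, h]
  | add x y hx hy => simp [hx, hy]
  | smul r x hx => simp [hx]

lemma Spans.of_surj {G : Type*} [Group G] {E : Type*} [Field E] {d : ℕ}
    (ρ : G →* Matrix (Fin d) (Fin d) E) (h : Function.Surjective (lft ρ)) : Spans ρ := by
  intro Z hZ
  have : ∀ x, (Z * lft ρ x).trace = 0 := by
    intro x
    induction x using MonoidAlgebra.induction_on with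
    | of g => rw [lft_of, hZ]
    | add x y hx hy => simp [mul_add, hx, hy]
    | smul r x hx => simp [hx]
  rw [Matrix.ext_iff_trace_mul_right]
  intro X
  obtain ⟨x, rfl⟩ := h X
  simp [this]

lemma Spans.surj {G : Type*} [Group G] {E : Type*} [Field E] {d : ℕ}
    (ρ : G →* Matrix (Fin d) (Fin d) E) (h : Spans ρ) : Function.Surjective (lft ρ) := by
  have key : LinearMap.range (lft ρ).toLinearMap = ⊤ := by
    by_contra hne
    obtain ⟨f, hf, hf'⟩ := Submodule.exists_le_ker_of_lt_top _ (lt_top_iff_ne_top.2 hne)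
    have hfZ : ∀ X, f X = ((Matrix.of fun j i => f (Matrix.single i j 1)) * X).trace := by
      intro X
      conv_lhs => rw [Matrix.matrix_eq_sum_single X]
      simp only [map_sum, Matrix.trace, Matrix.diag, Matrix.mul_apply, Matrix.of_apply]
      rw [Finset.sum_comm]
      refine Finset.sum_congr rfl fun j _ => Finset.sum_congr rfl fun i _ => ?_
      rw [show Matrix.single i j (X i j) = X i j • Matrix.single i j (1:E) by simp]
      rw [map_smul, smul_eq_mul, mul_comm]
    apply hf
    have hz := h (Matrix.of fun j i => f (Matrix.single i j 1)) (by
      intro g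
      rw [← hfZ]
      exact hf' ⟨MonoidAlgebra.of E G g, lft_of ρ g⟩)
    ext1 X
    rw [hfZ, hz]; simp
  exact LinearMap.range_eq_top.1 key

lemma transfer {G : Type*} [Group G] {E : Type*} [Field E] {d d' : ℕ}
    (ρ : G →* Matrix (Fin d) (Fin d) E) (σ : G →* Matrix (Fin d') (Fin d') E)
    (h : ∀ g, (ρ g).trace = (σ g).trace) (hρ : Spans ρ) (x : MonoidAlgebra E G)
    (hx : lft σ x = 0) : lft ρ x = 0 := by
  apply hρ
  intro g
  rw [← lft_of ρ, ← map_mul, trace_lft_eq ρ σ h, map_mul, hx]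
  simp

lemma Spans.trans {G : Type*} [Group G] [Finite G] {E : Type*} [Field E] {d : ℕ}
    (ρ σ : G →* Matrix (Fin d) (Fin d) E)
    (h : ∀ g, (ρ g).trace = (σ g).trace) (hρ : Spans ρ) : Spans σ := by
  apply Spans.of_surj
  have hs := hρ.surj
  have : FiniteDimensional E (MonoidAlgebra E G) := 
    Module.Finite.equiv (MonoidAlgebra.coeffLinearEquiv (S := E) (M := G) E).symm
  have h1 := LinearMap.finrank_range_add_finrank_ker (lft ρ).toLinearMap
  have h2 := LinearMap.finrank_range_add_finrank_ker (lft σ).toLinearMap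
  have h3 : LinearMap.ker (lft σ).toLinearMap ≤ LinearMap.ker (lft ρ).toLinearMap :=
    fun x hx => transfer ρ σ h hρ x hx
  have h4 := Submodule.finrank_mono h3
  rw [LinearMap.range_eq_top.2 hs, finrank_top] at h1
  have h5 := Submodule.finrank_le (LinearMap.range (lft σ).toLinearMap)
  have h6 : finrank E (LinearMap.range (lft σ).toLinearMap) = finrank E (Matrix (Fin d) (Fin d) E) := by
    omega
  exact LinearMap.range_eq_top.1 (Submodule.eq_top_of_finrank_eq h6)

noncomputable def mapRep {G : Type*} [Group G] {E E' : Type*} [Field E] [Field E'] {d : ℕ}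
    (f : E →+* E') (ρ : G →* Matrix (Fin d) (Fin d) E) : G →* Matrix (Fin d) (Fin d) E' :=
  (f.mapMatrix : Matrix (Fin d) (Fin d) E →+* Matrix (Fin d) (Fin d) E').toMonoidHom.comp ρ

lemma mapRep_apply {G : Type*} [Group G] {E E' : Type*} [Field E] [Field E'] {d : ℕ}
    (f : E →+* E') (ρ : G →* Matrix (Fin d) (Fin d) E) (g : G) :
    mapRep f ρ g = (ρ g).map f := rfl

lemma mapRep_trace {G : Type*} [Group G] {E E' : Type*} [Field E] [Field E'] {d : ℕ}
    (f : E →+* E') (ρ : G →* Matrix (Fin d) (Fin d) E) (g : G) :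
    (mapRep f ρ g).trace = f (ρ g).trace := by
  rw [mapRep_apply, AddMonoidHom.map_trace]

lemma Spans.of_map {G : Type*} [Group G] {E E' : Type*} [Field E] [Field E'] {d : ℕ} (f : E →+* E')
    (ρ : G →* Matrix (Fin d) (Fin d) E) (h : Spans (mapRep f ρ)) : Spans ρ := by
  intro Z hZ
  have := h (Z.map f) (by
    intro g
    have := congrArg f (hZ g)
    rw [map_zero, AddMonoidHom.map_trace, Matrix.map_mul] at this
    exact this)
  exact Matrix.map_injective f.injective (by simpa using this)

lemma Spans.coeffs {G : Type*} [Group G] [Fintype G] {E : Type*} [Field E] {d : ℕ}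
    (ρ : G →* Matrix (Fin d) (Fin d) E) (h : Spans ρ) (X : Matrix (Fin d) (Fin d) E) :
    ∃ c : G → E, ∑ g, c g • ρ g = X := by
  obtain ⟨x, rfl⟩ := h.surj _ X
  exact ⟨_, (lft_sum ρ x).symm⟩

lemma burnside {G : Type*} [Group G] {d : ℕ}
    (ρ : G →* Matrix (Fin d) (Fin d) ℂ) (hd : 0 < d)
    (h : ∀ W : Submodule ℂ (Fin d → ℂ),
        (∀ g : G, ∀ v ∈ W, (ρ g).mulVec v ∈ W) → W = ⊥ ∨ W = ⊤) : Spans ρ := by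
  apply Spans.of_surj
  let act : MonoidAlgebra ℂ G →ₐ[ℂ] Module.End ℂ (Fin d → ℂ) :=
    (Matrix.toLinAlgEquiv' : Matrix (Fin d) (Fin d) ℂ ≃ₐ[ℂ] _).toAlgHom.comp (lft ρ)
  let i1 : Module (MonoidAlgebra ℂ G) (Fin d → ℂ) := Module.compHom _ act.toRingHom
  have smul_def : ∀ (x : MonoidAlgebra ℂ G) (v : Fin d → ℂ), x • v = (lft ρ x).mulVec v :=
    fun x v => rfl
  have i2 : IsScalarTower ℂ (MonoidAlgebra ℂ G) (Fin d → ℂ) := ⟨fun a x v => by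
    simp [smul_def, Matrix.smul_mulVec]⟩
  have : Nonempty (Fin d) := ⟨⟨0, hd⟩⟩
  have i3 : IsSimpleModule (MonoidAlgebra ℂ G) (Fin d → ℂ) := by
    rw [isSimpleModule_iff]
    refine { eq_bot_or_eq_top := fun W => ?_ }
    rcases h (W.restrictScalars ℂ) (fun g v hv => by
      have := W.smul_mem (MonoidAlgebra.of ℂ G g) hv
      rw [smul_def, lft_of] at this
      exact this) with h | h
    · left; exact (Submodule.restrictScalars_eq_bot_iff ℂ _ _).1 h
    · right; exact (Submodule.restrictScalars_eq_top_iff ℂ _ _).1 h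
  have hbij := IsSimpleModule.algebraMap_end_bijective_of_isAlgClosed (A := MonoidAlgebra ℂ G)
    (V := Fin d → ℂ) ℂ
  intro X
  let f : Module.End (Module.End (MonoidAlgebra ℂ G) (Fin d → ℂ)) (Fin d → ℂ) :=
    { toFun := fun v => X.mulVec v
      map_add' := fun v w => Matrix.mulVec_add _ _ _
      map_smul' := fun e v => by
        obtain ⟨t, rfl⟩ := hbij.2 e
        simp [Matrix.mulVec_smul] }
  obtain ⟨r, hr⟩ := jacobson_density f (Finset.univ.image fun i : Fin d => (Pi.single i 1 : Fin d → ℂ))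
  refine ⟨r, ?_⟩
  ext i j
  have := hr (Pi.single j 1) (by simp)
  have := congrFun this i
  rw [smul_def] at this
  simpa [f] using this.symm

lemma trace_mem {G : Type*} [Group G] {K E : Type*} [Field K] [Field E] [Algebra K E] {d : ℕ}
    (ρ : G →* Matrix (Fin d) (Fin d) E)
    (hK : ∀ g, (ρ g).trace ∈ (algebraMap K E).range)
    {a : Matrix (Fin d) (Fin d) E} (ha : a ∈ Algebra.adjoin K (Set.range ρ)) :
    a.trace ∈ (algebraMap K E).range := by
  rw [← Subalgebra.mem_toSubmodule, ← MonoidHom.coe_mrange, Algebra.adjoin_eq_span,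
    Submonoid.closure_eq] at ha
  induction ha using Submodule.span_induction with
  | mem x hx => obtain ⟨g, rfl⟩ := hx; exact hK g
  | zero => simp
  | add x y _ _ hx hy => rw [Matrix.trace_add]; exact add_mem hx hy
  | smul r x _ hx =>
    rw [Matrix.trace_smul, Algebra.smul_def]; exact mul_mem ⟨r, rfl⟩ hx

lemma form {G : Type*} [Group G] {K E : Type*} [Field K] [Field E] [Algebra K E] {d : ℕ}
    (ρ : G →* Matrix (Fin d) (Fin d) E) (hρ : Spans ρ)
    (hK : ∀ g, (ρ g).trace ∈ (algebraMap K E).range) (φ : E →ₗ[K] K)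
    {ι : Type*} (s : Finset ι) (r : ι → E) (a : ι → Matrix (Fin d) (Fin d) E)
    (ha : ∀ i ∈ s, a i ∈ Algebra.adjoin K (Set.range ρ))
    (h : ∑ i ∈ s, r i • a i = 0) : ∑ i ∈ s, φ (r i) • a i = 0 := by
  apply hρ
  intro g
  have ht : ∀ i ∈ s, ∃ t : K, algebraMap K E t = (a i * ρ g).trace := fun i hi =>
    trace_mem ρ hK (mul_mem (ha i hi) (Algebra.subset_adjoin ⟨g, rfl⟩))
  choose! t ht using ht
  have h1 : ∑ i ∈ s, r i * algebraMap K E (t i) = 0 := by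
    have := congrArg (fun M => (M * ρ g).trace) h
    simp only [Finset.sum_mul, Matrix.trace_sum, smul_mul_assoc, Matrix.trace_smul, zero_mul,
      Matrix.trace_zero, smul_eq_mul] at this
    rw [← this]
    exact Finset.sum_congr rfl fun i hi => by rw [ht i hi]
  have h2 : ∑ i ∈ s, φ (r i) * t i = 0 := by
    have := congrArg φ h1
    rw [map_sum, map_zero] at this
    rw [← this]
    refine Finset.sum_congr rfl fun i hi => ?_
    rw [mul_comm (r i), ← Algebra.smul_def, map_smul, smul_eq_mul, mul_comm]
  have h3 := congrArg (algebraMap K E) h2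
  rw [map_zero, map_sum] at h3
  rw [Finset.sum_mul, Matrix.trace_sum, ← h3]
  refine Finset.sum_congr rfl fun i hi => ?_
  rw [smul_mul_assoc, Matrix.trace_smul, map_mul, ht i hi, Algebra.smul_def]


lemma mem_span_vec {G : Type*} [Group G] {F E : Type*} [Field F] [Field E] [Algebra F E]
    {d : ℕ} (ρ : G →* Matrix (Fin d) (Fin d) E) (v : Fin d → E) (x : Fin d → E)
    (hx : x ∈ Submodule.span F (Set.range fun g => ρ g *ᵥ v)) :
    ∃ a ∈ Algebra.adjoin F (Set.range ρ), a *ᵥ v = x := by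
  induction hx using Submodule.span_induction with
  | mem x hx => obtain ⟨g, rfl⟩ := hx; exact ⟨ρ g, Algebra.subset_adjoin ⟨g, rfl⟩, rfl⟩
  | zero => exact ⟨0, zero_mem _, by simp⟩
  | add x y _ _ hx hy =>
    obtain ⟨a, ha, rfl⟩ := hx
    obtain ⟨b, hb, rfl⟩ := hy
    exact ⟨a + b, add_mem ha hb, Matrix.add_mulVec _ _ _⟩
  | smul r x _ hx =>
    obtain ⟨a, ha, rfl⟩ := hx
    exact ⟨r • a, Subalgebra.smul_mem _ ha _, Matrix.smul_mulVec _ _ _⟩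

lemma descend {G : Type*} [Group G] [Finite G] {F E : Type*} [Field F] [Field E] [Algebra F E]
    {d : ℕ} (ρ : G →* Matrix (Fin d) (Fin d) E) (hρ : Spans ρ)
    (hF : ∀ g, (ρ g).trace ∈ (algebraMap F E).range) (v w : Fin d → E) (hv : v ≠ 0) (hw : w ≠ 0)
    (hy : vecMulVec v w ∈ Algebra.adjoin F (Set.range ρ)) :
    ∃ (k : ℕ) (σ : G →* Matrix (Fin k) (Fin k) F),
      ∀ g, algebraMap F E (σ g).trace = (ρ g).trace := by
  classical
  set L : Submodule F (Fin d → E) := Submodule.span F (Set.range fun g => ρ g *ᵥ v) with hL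
  have : FiniteDimensional F L := FiniteDimensional.span_of_finite F (Set.finite_range _)
  have hinv : ∀ g, ∀ x ∈ L, ρ g *ᵥ x ∈ L := by
    intro g x hx
    induction hx using Submodule.span_induction with
    | mem x hx =>
      obtain ⟨h, rfl⟩ := hx
      refine Submodule.subset_span ⟨g * h, ?_⟩
      simp [Matrix.mulVec_mulVec]
    | zero => simp
    | add x y _ _ hx hy => rw [Matrix.mulVec_add]; exact add_mem hx hy
    | smul r x _ hx => rw [Matrix.mulVec_smul]; exact L.smul_mem _ hx
  let act : G →* Module.End F L :=
    { toFun := fun g => ((Matrix.toLin' (ρ g)).restrictScalars F).restrict (hinv g)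
      map_one' := by ext x; simp [LinearMap.restrict_apply]
      map_mul' := fun g h => by
        apply LinearMap.ext
        intro x
        apply Subtype.ext
        change ρ (g * h) *ᵥ (x : Fin d → E) = ρ g *ᵥ (ρ h *ᵥ (x : Fin d → E))
        rw [map_mul, Matrix.mulVec_mulVec] }
  have hact : ∀ g (x : L), ((act g x : L) : Fin d → E) = ρ g *ᵥ (x : Fin d → E) := fun g x => rfl
  let e := Module.finBasis F L
  have hli : LinearIndependent E (fun i => (e i : Fin d → E)) := by
    rw [Fintype.linearIndependent_iff]
    intro r hr
    have ha : ∀ i, ∃ a ∈ Algebra.adjoin F (Set.range ρ), a *ᵥ v = (e i : Fin d → E) :=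
      fun i => mem_span_vec ρ v _ (e i).2
    choose a ha ha' using ha
    have h1 : ∑ i, r i • (a i * vecMulVec v w) = 0 := by
      simp only [mul_vecMulVec, ha', ← smul_vecMulVec]
      have : ∀ s : Finset (Fin (finrank F L)), ∑ i ∈ s, vecMulVec (r i • (e i : Fin d → E)) w
          = vecMulVec (∑ i ∈ s, r i • (e i : Fin d → E)) w := by
        intro s
        induction s using Finset.induction_on with
        | empty => simp
        | insert i s hi ih => rw [Finset.sum_insert hi, Finset.sum_insert hi, ih, add_vecMulVec]
      rw [this, hr, zero_vecMulVec]
    have h2 : ∀ φ : E →ₗ[F] F, ∀ i, φ (r i) = 0 := by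
      intro φ
      have h3 := form ρ hρ hF φ Finset.univ r _ (fun i _ => mul_mem (ha i) hy) h1
      have h4 : ∑ i, φ (r i) • e i = 0 := by
        obtain ⟨j, hj⟩ := Function.ne_iff.1 hw
        ext l
        have h5 := congrFun (congrFun h3 l) j
        simp only [mul_vecMulVec, ha', Matrix.sum_apply, Matrix.smul_apply, vecMulVec_apply,
          Matrix.zero_apply, ← smul_mul_assoc, ← Finset.sum_mul] at h5
        have h6 := (mul_eq_zero.1 h5).resolve_right hj
        simpa using h6
      exact Fintype.linearIndependent_iff.1 e.linearIndependent _ h4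
    intro i
    exact (Module.forall_dual_apply_eq_zero_iff F (r i)).1 fun φ => h2 φ i
  have hsp : ⊤ ≤ Submodule.span E (Set.range fun i => (e i : Fin d → E)) := by
    intro x _
    obtain ⟨j, hj⟩ := Function.ne_iff.1 hv
    have hLs : ∀ y ∈ L, y ∈ Submodule.span E (Set.range fun i => (e i : Fin d → E)) := by
      intro y hy
      have := congrArg Subtype.val (e.sum_repr ⟨y, hy⟩)
      simp only [Submodule.coe_sum, Submodule.coe_smul] at this
      rw [← this]
      refine Submodule.sum_mem _ fun i _ => ?_
      rw [← algebraMap_smul E]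
      exact Submodule.smul_mem _ _ (Submodule.subset_span ⟨i, rfl⟩)
    obtain ⟨y, hy⟩ := hρ.surj _ (vecMulVec x (Pi.single j (v j)⁻¹))
    have h1 : x = lft ρ y *ᵥ v := by
      have hj' : v j ≠ 0 := hj
      rw [hy, vecMulVec_mulVec]; simp [hj']
    rw [h1]
    clear hy h1
    induction y using MonoidAlgebra.induction_on with
    | of g => rw [lft_of]; exact hLs _ (Submodule.subset_span ⟨g, rfl⟩)
    | add x y hx hy => rw [map_add, Matrix.add_mulVec]; exact add_mem hx hy
    | smul r x hx => rw [map_smul, Matrix.smul_mulVec]; exact Submodule.smul_mem _ _ hx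
  let eb : Basis (Fin (finrank F L)) E (Fin d → E) := Basis.mk hli hsp
  have hrepr : ∀ (y : L) i, eb.repr (y : Fin d → E) i = algebraMap F E (e.repr y i) := by
    intro y i
    have := congrArg Subtype.val (e.sum_repr y)
    simp only [Submodule.coe_sum, Submodule.coe_smul] at this
    conv_lhs => rw [← this]
    have h2 : ∀ i, (e i : Fin d → E) = eb i := fun i => by simp [eb]
    have h3 : ∀ j, eb.repr (e.repr y j • eb j) i = if j = i then algebraMap F E (e.repr y j) else 0 := by
      intro j
      rw [← algebraMap_smul E (e.repr y j) (eb j), map_smul, Basis.repr_self]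
      simp [Finsupp.single_apply, Algebra.smul_def]
    simp only [h2, map_sum, Finsupp.finsetSum_apply, h3]
    simp
  refine ⟨finrank F L, (LinearMap.toMatrixAlgEquiv e : _ →* _).comp act, fun g => ?_⟩
  rw [← Matrix.trace_toLin'_eq (ρ g), LinearMap.trace_eq_matrix_trace E eb, AddMonoidHom.map_trace]
  congr 1
  ext i j
  have h3 : eb j = (e j : Fin d → E) := by simp [eb]
  simp only [Matrix.map_apply, LinearMap.toMatrix_apply, h3, Matrix.toLin'_apply]
  rw [← hact, hrepr]
  simp [LinearMap.toMatrixAlgEquiv_apply]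

lemma eigen {d : ℕ} (b : Matrix (Fin d) (Fin d) ℝ) (hb : b ≠ 0)
    (S : Set (Matrix (Fin d) (Fin d) ℝ)) (hS : Dense S) :
    ∃ a ∈ S, ∃ l : ℝ, l ≠ 0 ∧ ∃ z : Fin d → ℝ, z ≠ 0 ∧ (b * a) *ᵥ z = l • z ∧
      ∀ z', (b * a) *ᵥ z' = l • z' → ∃ t : ℝ, z' = t • z := by
  obtain ⟨i, j, hij⟩ : ∃ i j, b i j ≠ 0 := by
    by_contra! h
    exact hb (by ext i j; simp [h])
  have hd : 0 < d := i.pos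
  set p : Fin d → ℝ := b *ᵥ (Pi.single j (b i j)⁻¹) with hp
  set w : Fin d → ℝ := Pi.single i 1 with hw
  have hpi : p i = 1 := by simp [hp, hij]
  set a0 := vecMulVec (Pi.single j (b i j)⁻¹) w with ha0
  have hba0 : b * a0 = vecMulVec p w := by rw [ha0, mul_vecMulVec]
  let N : Matrix (Fin d) (Fin d) ℝ → ℝ := fun c => ∑ k, ∑ l, |c k l - vecMulVec p w k l|
  let f : ℝ → Matrix (Fin d) (Fin d) ℝ → ℝ := fun t c => (Matrix.scalar (Fin d) t - c).det
  have hN : Continuous N := by fun_prop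
  have hf : ∀ t, Continuous (f t) := fun t => by fun_prop
  have hft : ∀ c, Continuous (fun t => f t c) := fun c => by
    simp only [f, ← Matrix.eval_charpoly]
    fun_prop
  have hba : Continuous (fun a : Matrix (Fin d) (Fin d) ℝ => b * a) := by fun_prop
  have hU : IsOpen {a : Matrix (Fin d) (Fin d) ℝ |
      N (b * a) < 1/2 ∧ f (1/2) (b * a) < 0 ∧ 0 < f (3/2) (b * a)} := by
    refine IsOpen.and ?_ (IsOpen.and ?_ ?_)
    · exact isOpen_lt (hN.comp hba) continuous_const
    · exact isOpen_lt ((hf _).comp hba) continuous_const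
    · exact isOpen_lt continuous_const ((hf _).comp hba)
  have hfP : ∀ t, f t (b * a0) = t ^ (d - 1) * (t - 1) := by
    intro t
    simp only [f]
    rw [← Matrix.eval_charpoly, hba0, Matrix.charpoly_vecMulVec]
    have : p ⬝ᵥ w = 1 := by simp [hw, hpi]
    obtain ⟨n, rfl⟩ : ∃ n, d = n + 1 := ⟨d - 1, by omega⟩
    simp [this, pow_succ]
    ring
  have ha0U : N (b * a0) < 1/2 ∧ f (1/2) (b * a0) < 0 ∧ 0 < f (3/2) (b * a0) := by
    refine ⟨?_, ?_, ?_⟩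
    · rw [hba0]; simp [N]
    · rw [hfP]
      have : (0:ℝ) < (1/2) ^ (d-1) := by positivity
      nlinarith
    · rw [hfP]
      have : (0:ℝ) < (3/2) ^ (d-1) := by positivity
      nlinarith
  obtain ⟨a, ⟨hN1, hf1, hf2⟩, haS⟩ := hS.inter_open_nonempty _ hU ⟨a0, ha0U⟩
  refine ⟨a, haS, ?_⟩
  set c := b * a with hc
  obtain ⟨l, hl, hl0⟩ := intermediate_value_Icc (by norm_num : (1/2:ℝ) ≤ 3/2)
    ((hft c).continuousOn) (⟨hf1.le, hf2.le⟩ : (0:ℝ) ∈ Set.Icc (f (1/2) c) (f (3/2) c))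
  obtain ⟨z, hz, hz'⟩ := Matrix.exists_mulVec_eq_zero_iff.2 hl0
  have key : ∀ z, c *ᵥ z = l • z → z i = 0 → z = 0 := by
    intro z hz hzi
    have h1 : (c - vecMulVec p w) *ᵥ z = l • z := by
      rw [Matrix.sub_mulVec, vecMulVec_mulVec, hz]
      simp [hw, hzi]
    have h2 : ‖l • z‖ ≤ N c * ‖z‖ := by
      have hN0 : 0 ≤ N c := Finset.sum_nonneg fun k _ => Finset.sum_nonneg fun l _ => abs_nonneg _
      rw [← h1, pi_norm_le_iff_of_nonneg (by positivity)]
      intro k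
      calc ‖((c - vecMulVec p w) *ᵥ z) k‖ ≤ ∑ m, ‖(c k m - vecMulVec p w k m) * z m‖ :=
            norm_sum_le Finset.univ (fun m => (c k m - vecMulVec p w k m) * z m)
        _ ≤ ∑ m, |c k m - vecMulVec p w k m| * ‖z‖ := by
            refine Finset.sum_le_sum fun m _ => ?_
            rw [norm_mul, Real.norm_eq_abs]
            exact mul_le_mul_of_nonneg_left (norm_le_pi_norm z m) (abs_nonneg _)
        _ = (∑ m, |c k m - vecMulVec p w k m|) * ‖z‖ := by rw [Finset.sum_mul]
        _ ≤ N c * ‖z‖ := by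
            refine mul_le_mul_of_nonneg_right ?_ (norm_nonneg _)
            exact Finset.single_le_sum (f := fun k => ∑ m, |c k m - vecMulVec p w k m|)
              (fun k _ => Finset.sum_nonneg fun l _ => abs_nonneg _) (Finset.mem_univ k)
    rw [norm_smul, Real.norm_eq_abs, abs_of_nonneg (by linarith [hl.1])] at h2
    by_contra hz0
    have h3 : 0 < ‖z‖ := norm_pos_iff.2 hz0
    nlinarith [hl.1]
  have hcz : c *ᵥ z = l • z := by
    rw [Matrix.sub_mulVec, sub_eq_zero] at hz'
    rw [← hz']
    simp [Matrix.scalar_apply, ← Matrix.smul_one_eq_diagonal, Matrix.smul_mulVec]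
  refine ⟨l, by linarith [hl.1], z, hz, hcz, fun z' hz'' => ⟨z' i / z i, ?_⟩⟩
  have hzi : z i ≠ 0 := fun h => hz (key z hcz h)
  refine sub_eq_zero.1 (key _ ?_ ?_)
  · rw [Matrix.mulVec_sub, Matrix.mulVec_smul, hz'', hcz, smul_sub, smul_comm]
  · simp [hzi]

lemma dense_adjoin {G : Type*} [Group G] [Fintype G] {d : ℕ}
    (ρ : G →* Matrix (Fin d) (Fin d) ℝ) (hρ : Spans ρ) (K : IntermediateField ℚ ℝ) :
    Dense (Algebra.adjoin K (Set.range ρ) : Set (Matrix (Fin d) (Fin d) ℝ)) := by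
  have h1 : DenseRange (Pi.map (fun (_ : G) (q : ℚ) => (q : ℝ))) :=
    DenseRange.piMap fun _ => Rat.denseRange_cast
  let T : (G → ℝ) → Matrix (Fin d) (Fin d) ℝ := fun c => ∑ g, c g • ρ g
  have hT : Continuous T := by fun_prop
  have hs : Function.Surjective T := fun X => hρ.coeffs _ X
  have h2 := hs.denseRange.comp h1 hT
  refine Dense.mono ?_ h2
  rintro _ ⟨q, rfl⟩
  refine sum_mem fun g _ => ?_
  have : ((q g : ℝ)) • ρ g = (algebraMap ℚ K (q g)) • ρ g := by
    rw [← algebraMap_smul ℝ (algebraMap ℚ K (q g))]; rfl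
  simp only [Pi.map_apply]
  rw [this]
  have hm : ρ g ∈ Algebra.adjoin K (Set.range ρ) := Algebra.subset_adjoin ⟨g, rfl⟩
  exact Subalgebra.smul_mem _ hm _


lemma aeval_mulVec {F : Type*} [Field F] {E : Type*} [Field E] [Algebra F E] {d : ℕ}
    (c : Matrix (Fin d) (Fin d) E) (l : E) (z : Fin d → E) (h : c *ᵥ z = l • z)
    (p : Polynomial F) : (Polynomial.aeval c p) *ᵥ z = (Polynomial.aeval l p) • z := by
  induction p using Polynomial.induction_on' with
  | add p q hp hq => simp [Matrix.add_mulVec, add_smul, hp, hq]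
  | monomial n a =>
    have hn : ∀ n : ℕ, c ^ n *ᵥ z = l ^ n • z := by
      intro n
      induction n with
      | zero => simp
      | succ n ih =>
        rw [pow_succ, ← Matrix.mulVec_mulVec, h, Matrix.mulVec_smul, ih, smul_smul, pow_succ,
          mul_comm]
    rw [Polynomial.aeval_monomial, Polynomial.aeval_monomial, ← Algebra.smul_def,
      ← Algebra.smul_def, Matrix.smul_mulVec, hn, smul_assoc]

lemma claim2 {G : Type*} [Group G] [Fintype G] {d : ℕ} (ρ : G →* Matrix (Fin d) (Fin d) ℝ)
    (hρ : Spans ρ) (K : IntermediateField ℚ ℝ) (hK : ∀ g, (ρ g).trace ∈ K)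
    (b : Matrix (Fin d) (Fin d) ℝ) (hb : b ∈ Algebra.adjoin K (Set.range ρ)) (hb0 : b ≠ 0)
    (n : ℕ) (P : Matrix (Fin d) (Fin n) ℂ) (Q : Matrix (Fin n) (Fin d) ℂ)
    (hPQ : b.map Complex.ofRealHom = P * Q) :
    ∃ l : ℝ, IsIntegral K l ∧ (minpoly K l).natDegree ≤ n ∧
      ∃ (k : ℕ) (σ : G →* Matrix (Fin k) (Fin k) (IntermediateField.adjoin K {l})),
        ∀ g, ((σ g).trace : ℝ) = (ρ g).trace := by
  obtain ⟨a, haS, l, hl, z, hz, hcz, huniq⟩ := eigen b hb0 _ (dense_adjoin ρ hρ K)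
  set c := b * a with hc
  have hcA : c ∈ Algebra.adjoin K (Set.range ρ) := mul_mem hb haS
  have hKr : ∀ g, (ρ g).trace ∈ (algebraMap K ℝ).range := fun g => ⟨⟨_, hK g⟩, rfl⟩
  -- complex relation
  let aC := a.map Complex.ofRealHom
  let M := Q * aC * P
  have hcC : c.map Complex.ofRealHom = P * (Q * aC) := by
    rw [hc, Matrix.map_mul, hPQ, Matrix.mul_assoc]
  have hpow : ∀ k : ℕ, (c ^ (k + 1)).map Complex.ofRealHom = P * M ^ k * (Q * aC) := by
    intro k
    induction k with
    | zero => simp [hcC]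
    | succ k ih =>
      rw [pow_succ, Matrix.map_mul, ih, hcC, pow_succ]
      simp only [M, Matrix.mul_assoc]
  have hrel : ∑ k ∈ Finset.range (n + 1),
      M.charpoly.coeff k • (c ^ (k + 1)).map Complex.ofRealHom = 0 := by
    have h1 := Matrix.aeval_self_charpoly M
    rw [Polynomial.aeval_eq_sum_range, Matrix.charpoly_natDegree_eq_dim, Fintype.card_fin] at h1
    have h2 := congrArg (fun X => P * X * (Q * aC)) h1
    simp only [Matrix.mul_sum, Matrix.sum_mul, Matrix.mul_smul, Matrix.smul_mul, Matrix.mul_zero,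
      Matrix.zero_mul] at h2
    simpa only [hpow] using h2
  have hrelR : ∑ k ∈ Finset.range (n + 1), (M.charpoly.coeff k).re • c ^ (k + 1) = 0 := by
    ext i j
    have := congrArg Complex.re (congrFun (congrFun hrel i) j)
    simpa [Matrix.sum_apply] using this
  have hlead : (M.charpoly.coeff n).re = 1 := by
    have := (Matrix.charpoly_monic M).coeff_natDegree
    rw [Matrix.charpoly_natDegree_eq_dim, Fintype.card_fin] at this
    simp [this]
  obtain ⟨φ, hφ⟩ : ∃ φ : ℝ →ₗ[K] K, φ 1 ≠ 0 := by
    by_contra! h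
    exact one_ne_zero ((Module.forall_dual_apply_eq_zero_iff K (1 : ℝ)).1 h)
  have hrelK := form ρ hρ hKr φ _ _ _ (fun k _ => pow_mem hcA (k + 1)) hrelR
  let p : Polynomial K := ∑ k ∈ Finset.range (n + 1),
    Polynomial.monomial k (φ (M.charpoly.coeff k).re)
  have hpn : p.coeff n = φ 1 := by
    simp [p, Polynomial.finsetSum_coeff, Polynomial.coeff_monomial, hlead]
  have hp0 : p ≠ 0 := fun h => hφ (by rw [← hpn, h]; simp)
  have hpd : p.natDegree ≤ n := by
    refine Polynomial.natDegree_sum_le_of_forall_le _ _ fun k hk => ?_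
    exact (Polynomial.natDegree_monomial_le _).trans (by simpa [Nat.lt_succ_iff] using hk)
  have hpc : Polynomial.aeval c (p * Polynomial.X) = 0 := by
    rw [← hrelK]
    simp only [p, map_mul, map_sum, Polynomial.aeval_monomial, Polynomial.aeval_X, Finset.sum_mul,
      ← Algebra.smul_def, smul_mul_assoc, pow_succ]
  have hpl : Polynomial.aeval l p = 0 := by
    have := aeval_mulVec c l z hcz (p * Polynomial.X)
    rw [hpc, Matrix.zero_mulVec] at this
    have := (smul_eq_zero.1 this.symm).resolve_right hz
    rw [map_mul, Polynomial.aeval_X] at this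
    exact (mul_eq_zero.1 this).resolve_right hl
  have hint : IsIntegral K l := isAlgebraic_iff_isIntegral.1 ⟨p, hp0, hpl⟩
  refine ⟨l, hint, (Polynomial.natDegree_le_of_dvd (minpoly.dvd K l hpl) hp0).trans hpd, ?_⟩
  let F := IntermediateField.adjoin K {l}
  let lF : F := IntermediateField.AdjoinSimple.gen K l
  have hlF : algebraMap F ℝ lF = l := IntermediateField.AdjoinSimple.algebraMap_gen K l
  have hcF : c ∈ Algebra.adjoin F (Set.range ρ) := by
    refine Algebra.adjoin_induction (p := fun x _ => x ∈ Algebra.adjoin F (Set.range ρ))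
      ?_ ?_ ?_ ?_ hcA
    · intro x hx; exact Algebra.subset_adjoin hx
    · intro r
      have : algebraMap K (Matrix (Fin d) (Fin d) ℝ) r = algebraMap F _ (algebraMap K F r) :=
        IsScalarTower.algebraMap_apply _ _ _ _
      rw [this]
      exact Subalgebra.algebraMap_mem _ _
    · intro x y _ _ hx hy; exact add_mem hx hy
    · intro x y _ _ hx hy; exact mul_mem hx hy
  have hcint : IsIntegral F c := by
    have : IsIntegral K c := isAlgebraic_iff_isIntegral.1
      ⟨p * Polynomial.X, mul_ne_zero hp0 Polynomial.X_ne_zero, hpc⟩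
    exact this.tower_top
  have hroot : (minpoly F c).IsRoot lF := by
    have := aeval_mulVec c l z hcz (minpoly F c)
    rw [minpoly.aeval, Matrix.zero_mulVec] at this
    have := (smul_eq_zero.1 this.symm).resolve_right hz
    rw [← hlF, Polynomial.aeval_algebraMap_apply] at this
    have := (map_eq_zero _).1 this
    simpa [Polynomial.IsRoot] using this
  obtain ⟨q, hq⟩ := Polynomial.dvd_iff_isRoot.2 hroot
  have hm0 := minpoly.ne_zero hcint
  have hq0 : q ≠ 0 := fun h => hm0 (by rw [hq, h, mul_zero])
  have hy0 : Polynomial.aeval c q ≠ 0 := by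
    intro h
    have h1 := Polynomial.natDegree_le_of_dvd (minpoly.dvd F c h) hq0
    rw [hq, Polynomial.natDegree_mul (Polynomial.X_sub_C_ne_zero _) hq0,
      Polynomial.natDegree_X_sub_C] at h1
    omega
  set y := Polynomial.aeval c q with hy
  have hcy : c * y = l • y := by
    have h1 := minpoly.aeval F c
    rw [hq, map_mul, map_sub, Polynomial.aeval_X, Polynomial.aeval_C, sub_mul, sub_eq_zero,
      ← Algebra.smul_def, ← algebraMap_smul ℝ lF] at h1
    rw [h1, hlF]
  have hcol : ∀ j, ∃ t : ℝ, y.col j = t • z := by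
    intro j
    apply huniq
    ext i
    have := congrFun (congrFun hcy i) j
    simpa [Matrix.mul_apply, Matrix.mulVec, dotProduct] using this
  choose w hw using hcol
  have hyw : y = vecMulVec z w := by
    ext i j
    have := congrFun (hw j) i
    simp only [Matrix.col_apply, Pi.smul_apply, smul_eq_mul] at this
    rw [this, vecMulVec_apply, mul_comm]
  have hw0 : w ≠ 0 := fun h => hy0 (by rw [hyw, h, vecMulVec_zero])
  have hyA : vecMulVec z w ∈ Algebra.adjoin F (Set.range ρ) := by
    rw [← hyw, hy, Polynomial.aeval_eq_sum_range]
    exact sum_mem fun i _ => Subalgebra.smul_mem _ (pow_mem hcF _) _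
  exact descend ρ hρ (fun g => ⟨algebraMap K F ⟨_, hK g⟩, rfl⟩) z w hz hw0 hyA

lemma rank_one {d : ℕ} (B : Matrix (Fin d) (Fin d) ℂ)
    (h : ∀ X, ∃ s : ℂ, B * X * B = s • B) : ∃ v w, B = vecMulVec v w := by
  by_cases hB : B = 0
  · exact ⟨0, 0, by simp [hB]⟩
  obtain ⟨i, j, hij⟩ : ∃ i j, B i j ≠ 0 := by
    by_contra! h
    exact hB (by ext i j; simp [h])
  obtain ⟨s, hs⟩ := h (Matrix.single j i 1)
  have key : ∀ k l, B k j * B i l = s * B k l := by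
    intro k l
    have := congrFun (congrFun hs k) l
    rw [Matrix.single_eq_single_vecMulVec_single, mul_vecMulVec, vecMulVec_mul] at this
    simpa [vecMulVec_apply] using this
  have hs0 : s ≠ 0 := by
    intro h0
    have := key i j
    rw [h0, zero_mul] at this
    exact hij (by simpa using this)
  refine ⟨fun k => s⁻¹ * B k j, fun l => B i l, ?_⟩
  ext k l
  rw [vecMulVec_apply, mul_assoc, key, inv_mul_cancel_left₀ hs0]

lemma claim1 {G : Type*} [Group G] [Fintype G] {d : ℕ} (hd : 0 < d)
    {K L : Type*} [Field K] [CharZero K] [Field L] [Algebra K L] [FiniteDimensional K L]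
    [Algebra K ℝ] [Algebra K ℂ] [IsScalarTower K ℝ ℂ]
    (ρ : G →* Matrix (Fin d) (Fin d) ℝ) (σ : G →* Matrix (Fin d) (Fin d) L)
    (χ : G → K) (hρχ : ∀ g, (ρ g).trace = algebraMap K ℝ (χ g))
    (hσχ : ∀ g, (σ g).trace = algebraMap K L (χ g))
    (hρ : Spans (mapRep Complex.ofRealHom ρ)) :
    ∃ b ∈ Algebra.adjoin K (Set.range ρ), b ≠ 0 ∧
      ∃ (P : Matrix (Fin d) (Fin (finrank K L)) ℂ) (Q : Matrix (Fin (finrank K L)) (Fin d) ℂ),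
        b.map Complex.ofRealHom = P * Q := by
  classical
  have htr : ∀ (τ : L →ₐ[K] ℂ) g,
      (mapRep Complex.ofRealHom ρ g).trace = (mapRep (τ : L →+* ℂ) σ g).trace := by
    intro τ g
    rw [mapRep_trace, mapRep_trace, hρχ, hσχ]
    simp [← IsScalarTower.algebraMap_apply K ℝ ℂ, ← Complex.coe_algebraMap]
  have hσ : Spans σ := by
    have τ : L →ₐ[K] ℂ := IsAlgClosed.lift
    exact Spans.of_map (τ : L →+* ℂ) σ (hρ.trans _ _ (htr τ))
  let o : Fin d := ⟨0, hd⟩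
  obtain ⟨c, hc⟩ := hσ.coeffs _ (Matrix.single o o 1)
  let x : (L →ₐ[K] ℂ) → MonoidAlgebra ℂ G := fun τ => ∑ g, τ (c g) • MonoidAlgebra.of ℂ G g
  have hlx : ∀ τ (η : G →* Matrix (Fin d) (Fin d) ℂ), lft η (x τ) = ∑ g, τ (c g) • η g := by
    intro τ η
    simp only [x, map_sum, map_smul, lft_of]
  have hx2 : ∀ τ : L →ₐ[K] ℂ, lft (mapRep (τ : L →+* ℂ) σ) (x τ) = Matrix.single o o 1 := by
    intro τ
    rw [hlx]
    have := congrArg (fun X => X.map (τ : L →+* ℂ)) hc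
    ext i j
    have := congrFun (congrFun this i) j
    simp only [Matrix.map_apply, Matrix.sum_apply, Matrix.smul_apply, map_sum, smul_eq_mul,
      map_mul] at this
    simp only [mapRep_apply, Matrix.map_apply, Matrix.sum_apply, Matrix.smul_apply, smul_eq_mul]
    refine this.trans ?_
    simp [Matrix.single_apply]
  have hone : ∀ τ, ∃ v w, lft (mapRep Complex.ofRealHom ρ) (x τ) = vecMulVec v w := by
    intro τ
    apply rank_one
    intro X
    obtain ⟨y, rfl⟩ := hρ.surj _ X
    refine ⟨(lft (mapRep (τ : L →+* ℂ) σ) y) o o, ?_⟩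
    rw [← sub_eq_zero, ← map_mul, ← map_mul, ← map_smul, ← map_sub]
    apply transfer _ _ (htr τ) hρ
    rw [map_sub, map_mul, map_mul, map_smul, hx2, sub_eq_zero]
    ext i j
    rw [Matrix.single_eq_single_vecMulVec_single, vecMulVec_mul, vecMulVec_mul_vecMulVec]
    simp [vecMulVec_apply]
    try ring
  choose v w hvw using hone
  let b : Matrix (Fin d) (Fin d) ℝ := ∑ g, Algebra.trace K L (c g) • ρ g
  have hbC : b.map Complex.ofRealHom = ∑ τ, lft (mapRep Complex.ofRealHom ρ) (x τ) := by
    simp only [hlx]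
    rw [Finset.sum_comm]
    simp only [← Finset.sum_smul, ← trace_eq_sum_embeddings (K := K) (L := L) ℂ]
    ext i j
    simp only [b, Matrix.map_apply, Matrix.sum_apply, Matrix.smul_apply, map_sum, mapRep_apply]
    refine Finset.sum_congr rfl fun g _ => ?_
    rw [IsScalarTower.algebraMap_apply K ℝ ℂ, Algebra.smul_def]
    simp
  refine ⟨b, sum_mem fun g _ => ?_, ?_, ?_⟩
  · have hm : ρ g ∈ Algebra.adjoin K (Set.range ρ) := Algebra.subset_adjoin ⟨g, rfl⟩
    exact Subalgebra.smul_mem _ hm _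
  · intro hb
    rw [hb] at hbC
    have h1 := congrArg Matrix.trace hbC
    rw [Matrix.trace_sum] at h1
    have h3 : ∀ τ, (lft (mapRep Complex.ofRealHom ρ) (x τ)).trace = 1 := by
      intro τ
      rw [trace_lft_eq _ _ (htr τ), hx2]
      simp
    simp only [h3] at h1
    simp at h1
    exact (finrank_pos (R := K) (M := L)).ne (by exact_mod_cast h1)
  · let e : (L →ₐ[K] ℂ) ≃ Fin (finrank K L) := Fintype.equivFinOfCardEq (AlgHom.card K L ℂ)
    refine ⟨Matrix.of fun i k => v (e.symm k) i, Matrix.of fun k j => w (e.symm k) j, ?_⟩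
    rw [hbC]
    ext i j
    simp only [hvw, Matrix.sum_apply, vecMulVec_apply, Matrix.mul_apply, Matrix.of_apply]
    exact (Equiv.sum_comp e.symm (fun τ => v τ i * w τ j)).symm

lemma integral_trace {d n : ℕ} (hn : 0 < n) (M : Matrix (Fin d) (Fin d) ℂ) (hM : M ^ n = 1) :
    IsIntegral ℚ M.trace := by
  rw [Matrix.trace_eq_sum_roots_charpoly]
  refine IsIntegral.multiset_sum fun m hm => ?_
  rw [Polynomial.mem_roots (Matrix.charpoly_monic M).ne_zero, Polynomial.IsRoot,
    Matrix.eval_charpoly] at hm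
  obtain ⟨z, hz, hz'⟩ := Matrix.exists_mulVec_eq_zero_iff.2 hm
  have hcz : M *ᵥ z = m • z := by
    rw [Matrix.sub_mulVec, sub_eq_zero] at hz'
    rw [← hz']
    simp [Matrix.scalar_apply, ← Matrix.smul_one_eq_diagonal, Matrix.smul_mulVec]
  have h1 := aeval_mulVec M m z hcz (Polynomial.X ^ n - 1 : Polynomial ℚ)
  simp only [map_sub, map_pow, Polynomial.aeval_X, map_one, hM, sub_self, Matrix.zero_mulVec] at h1
  have h2 := (smul_eq_zero.1 h1.symm).resolve_right hz
  exact ⟨Polynomial.X ^ n - 1, Polynomial.monic_X_pow_sub_C 1 hn.ne', by simpa using h2⟩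

end RMSF

/-- An irreducible complex character afforded by a real representation admits a real
minimal splitting field: a subfield `F` of `ℝ` containing `ℚ(χ)` affording `χ`, of
minimal degree among all finite extensions affording `χ`. -/
theorem exists_real_minimal_splitting_field
    {G : Type*} [Group G] [Fintype G] (χ : G → ℂ)
    -- `χ` is an irreducible complex character
    (hχirr : ∃ (d : ℕ) (ρ : G →* Matrix (Fin d) (Fin d) ℂ),
      (∀ g : G, (ρ g).trace = χ g) ∧
      (∀ W : Submodule ℂ (Fin d → ℂ),
        (∀ g : G, ∀ v ∈ W, (ρ g).mulVec v ∈ W) → W = ⊥ ∨ W = ⊤))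
    -- `χ` is afforded by a real representation
    (hreal : ∃ (d : ℕ) (ρ : G →* Matrix (Fin d) (Fin d) ℝ),
      ∀ g : G, ((ρ g).trace : ℂ) = χ g) :
    ∃ F : IntermediateField ℚ ℂ,
      IntermediateField.adjoin ℚ (Set.range χ) ≤ F ∧
      (∀ x : F, ∃ r : ℝ, (x : ℂ) = (r : ℂ)) ∧
      FiniteDimensional ℚ F ∧
      Affords F χ ∧
      (∀ F' : IntermediateField ℚ ℂ,
        IntermediateField.adjoin ℚ (Set.range χ) ≤ F' → FiniteDimensional ℚ F' →
        Affords F' χ → finrank ℚ F ≤ finrank ℚ F') := by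
  classical
  obtain ⟨d₀, ρ₀, hρ₀, hirr⟩ := hχirr
  obtain ⟨d, ρ, hρχ⟩ := hreal
  have hdim : ∀ (d' : ℕ), (d' : ℂ) = χ 1 → d' = d := by
    intro d' h
    have h2 : ((d : ℝ) : ℂ) = χ 1 := by rw [← hρχ 1]; simp
    have h3 : (d' : ℂ) = (d : ℂ) := by rw [h, ← h2]; simp
    exact_mod_cast h3
  obtain rfl : d₀ = d := hdim _ (by rw [← hρ₀ 1]; simp)
  rcases Nat.eq_zero_or_pos d₀ with hd | hd
  · subst hd
    have hχ0 : ∀ g, χ g = 0 := fun g => by rw [← hρ₀ g]; simp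
    refine ⟨⊥, ?_, ?_, inferInstance, ⟨0, 1, fun g => by simp [hχ0 g]⟩, ?_⟩
    · rw [IntermediateField.adjoin_le_iff]
      rintro _ ⟨g, rfl⟩
      rw [hχ0 g]
      exact zero_mem _
    · rintro ⟨x, hx⟩
      obtain ⟨q, rfl⟩ := IntermediateField.mem_bot.1 hx
      exact ⟨q, by simp⟩
    · intro F' _ hfin _
      rw [IntermediateField.finrank_bot]
      exact finrank_pos
  let ι : ℝ →ₐ[ℚ] ℂ := Complex.ofRealAm.restrictScalars ℚ
  have hι : ∀ r : ℝ, ι r = (r : ℂ) := fun r => rfl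
  have htrC : ∀ g, (RMSF.mapRep Complex.ofRealHom ρ g).trace = χ g := by
    intro g
    rw [RMSF.mapRep_trace, ← hρχ g]; rfl
  have hspC : RMSF.Spans (RMSF.mapRep Complex.ofRealHom ρ) :=
    (RMSF.burnside ρ₀ hd hirr).trans _ _ (fun g => by rw [hρ₀, htrC])
  have hsp : RMSF.Spans ρ := RMSF.Spans.of_map _ _ hspC
  let K : IntermediateField ℚ ℝ := IntermediateField.adjoin ℚ (Set.range fun g => (ρ g).trace)
  have hK : ∀ g, (ρ g).trace ∈ K := fun g => IntermediateField.subset_adjoin _ _ ⟨g, rfl⟩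
  have hKmap : IntermediateField.adjoin ℚ (Set.range χ) = K.map ι := by
    rw [IntermediateField.adjoin_map, ← Set.range_comp]
    congr 2
    ext g
    rw [← hρχ g]; rfl
  have hKfin : FiniteDimensional ℚ K := by
    have : Finite (Set.range fun g => (ρ g).trace) := Set.finite_range _
    refine IntermediateField.finiteDimensional_adjoin ?_
    rintro _ ⟨g, rfl⟩
    have h1 := RMSF.integral_trace Fintype.card_pos (RMSF.mapRep Complex.ofRealHom ρ g)
      (by rw [← map_pow, pow_card_eq_one, map_one])
    rw [RMSF.mapRep_trace] at h1
    exact (isIntegral_algHom_iff ι ι.injective).1 h1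
  let good : ℕ → Prop := fun n => ∃ b ∈ Algebra.adjoin K (Set.range ρ), b ≠ 0 ∧
    ∃ (P : Matrix (Fin d₀) (Fin n) ℂ) (Q : Matrix (Fin n) (Fin d₀) ℂ),
      b.map Complex.ofRealHom = P * Q
  have hex : ∃ n, good n := by
    haveI : Nonempty (Fin d₀) := ⟨⟨0, hd⟩⟩
    exact ⟨d₀, 1, one_mem _, one_ne_zero, 1, 1, by simp⟩
  obtain ⟨b, hb, hb0, P, Q, hPQ⟩ := Nat.find_spec hex
  obtain ⟨l, hint, hdeg, k, σ, hσ⟩ := RMSF.claim2 ρ hsp K hK b hb hb0 _ P Q hPQ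
  let F₁ : IntermediateField K ℝ := IntermediateField.adjoin K {l}
  have hF₁ : FiniteDimensional K F₁ := IntermediateField.adjoin.finiteDimensional hint
  have hF₁r : finrank K F₁ ≤ Nat.find hex := by
    rw [IntermediateField.adjoin.finrank hint]; exact hdeg
  let F₂ : IntermediateField ℚ ℝ := F₁.restrictScalars ℚ
  have hF₂r : finrank ℚ F₂ = finrank ℚ K * finrank K F₁ :=
    (Module.finrank_mul_finrank ℚ K F₁).symm
  have hF₂ : FiniteDimensional ℚ F₂ := FiniteDimensional.trans ℚ K F₁
  let eq : F₂ ≃ₐ[ℚ] F₂.map ι := F₂.equivMap ι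
  have heq : ∀ x : F₂, ((eq x : F₂.map ι) : ℂ) = ((x : ℝ) : ℂ) := fun x => rfl
  refine ⟨F₂.map ι, ?_, ?_, ?_, ?_, ?_⟩
  · rw [hKmap]
    refine IntermediateField.map_mono ι ?_
    intro x hx
    exact F₁.algebraMap_mem ⟨x, hx⟩
  · rintro ⟨_, r, hr, rfl⟩
    exact ⟨r, rfl⟩
  · exact Module.Finite.equiv eq.toLinearEquiv
  · refine ⟨k, RMSF.mapRep (eq.toRingEquiv.toRingHom : F₂ →+* F₂.map ι) σ, fun g => ?_⟩
    have h1 := RMSF.mapRep_trace (eq.toRingEquiv.toRingHom : F₂ →+* F₂.map ι) σ g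
    rw [← hρχ g, ← hσ g]
    exact congrArg (fun z : F₂.map ι => (z : ℂ)) h1
  · intro F' hF' hfin ⟨d', σ', hσ'⟩
    obtain rfl : d' = d₀ := hdim _ (by rw [← hσ' 1]; simp)
    rw [← eq.toLinearEquiv.finrank_eq, hF₂r]
    have hmem : ∀ x : K, ((x : ℝ) : ℂ) ∈ F' := fun x => hF' (by
      rw [hKmap]; exact ⟨x, x.2, rfl⟩)
    let j : K →+* F' := (Complex.ofRealHom.comp (algebraMap K ℝ)).codRestrict F' hmem
    letI : Algebra K F' := j.toAlgebra
    have : IsScalarTower ℚ K F' := IsScalarTower.of_algebraMap_eq' (Subsingleton.elim _ _)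
    have : FiniteDimensional K F' := FiniteDimensional.right ℚ K F'
    rw [← Module.finrank_mul_finrank ℚ K F']
    refine Nat.mul_le_mul_left _ (hF₁r.trans (Nat.find_min' hex ?_))
    refine RMSF.claim1 hd ρ σ' (fun g => ⟨_, hK g⟩) (fun g => rfl) (fun g => ?_) hspC
    apply Subtype.ext
    rw [hσ' g, ← hρχ g]
    rfl
end

section
/- Let K be a number field of degree n which is not totally imaginary (i.e., K has at least one real embedding). Then for every positive integer c ≤ n − 1 there exists a c-hyperbolic unit μ ∈ U_K. -/
open NumberField Module

/-- A unit `μ` of the ring of integers of a number field `K` is `c`-hyperbolic if no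
product of `k` (not necessarily distinct) values of embeddings `K → ℂ` at `μ`, for
`1 ≤ k ≤ c`, has absolute value `1`. -/
def IsCHyperbolicUnit (K : Type*) [Field K] [NumberField K] (c : ℕ) (μ : (𝓞 K)ˣ) : Prop :=
  ∀ k : ℕ, 1 ≤ k → k ≤ c → ∀ σs : Fin k → (K →+* ℂ),
    ‖∏ i, σs i ((μ : 𝓞 K) : K)‖ ≠ 1

/-- Finitely many nonzero homomorphisms to `ℝ` are simultaneously nonzero somewhere. -/
theorem exists_forall_hom_ne_zero {G : Type*} [AddCommGroup G] {ι : Type*} (s : Finset ι)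
    (f : ι → G →+ ℝ) (hf : ∀ i ∈ s, ∃ g, f i g ≠ 0) : ∃ g, ∀ i ∈ s, f i g ≠ 0 := by
  classical
  induction s using Finset.induction_on with
  | empty => exact ⟨0, by simp⟩
  | insert a s ha ih =>
    obtain ⟨g, hg⟩ := ih (fun i hi => hf i (Finset.mem_insert_of_mem hi))
    obtain ⟨h, hh⟩ := hf a (Finset.mem_insert_self a s)
    by_cases hag : f a g = 0
    · -- use `h + N • g` for a suitable `N`
      obtain ⟨N, hN⟩ := Infinite.exists_notMem_finset
        (s.biUnion fun i => if hx : ∃ N : ℕ, f i h + N * f i g = 0 then {hx.choose} else ∅)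
      refine ⟨h + N • g, fun i hi => ?_⟩
      rcases Finset.mem_insert.1 hi with rfl | hi
      · simpa [hag] using hh
      · intro h0
        apply hN
        have h0' : f i h + N * f i g = 0 := by simpa using h0
        have hx : ∃ N : ℕ, f i h + N * f i g = 0 := ⟨N, h0'⟩
        refine Finset.mem_biUnion.2 ⟨i, hi, ?_⟩
        rw [dif_pos hx, Finset.mem_singleton]
        have h1 := hx.choose_spec
        have h2 : (N : ℝ) * f i g = hx.choose * f i g := by linarith
        exact_mod_cast mul_right_cancel₀ (hg i hi) h2
    · refine ⟨g, fun i hi => ?_⟩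
      rcases Finset.mem_insert.1 hi with rfl | hi
      · exact hag
      · exact hg i hi

/-- The product formula for units, in logarithmic form. -/
theorem sum_mult_log_unit (K : Type*) [Field K] [NumberField K] (u : (𝓞 K)ˣ) :
    ∑ w : InfinitePlace K, (w.mult : ℝ) * Real.log (w ((u : 𝓞 K) : K)) = 0 := by
  have h := congr_arg Real.log (InfinitePlace.prod_eq_abs_norm ((u : 𝓞 K) : K))
  rw [Units.norm, Rat.cast_one, Real.log_one, Real.log_prod] at h
  · simpa [Real.log_pow] using h
  · intro w _
    simp

/-- The homomorphism `u ↦ ∑ i, log |σ_i u|`. -/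
noncomputable def logHom (K : Type*) [Field K] [NumberField K] {k : ℕ}
    (σs : Fin k → (K →+* ℂ)) : Additive (𝓞 K)ˣ →+ ℝ where
  toFun x := ∑ i, Real.log ‖σs i ((x.toMul : 𝓞 K) : K)‖
  map_zero' := by simp
  map_add' x y := by
    rw [← Finset.sum_add_distrib]
    refine Finset.sum_congr rfl fun i _ => ?_
    rw [← Real.log_mul (by simp) (by simp)]
    simp

theorem logHom_ne_zero (K : Type*) [Field K] [NumberField K]
    (hreal : Nonempty (K →+* ℝ)) {k : ℕ} (hk : 1 ≤ k) (hkn : k < finrank ℚ K)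
    (σs : Fin k → (K →+* ℂ)) : ∃ g, logHom K σs g ≠ 0 := by
  classical
  by_contra! hcon
  let m : InfinitePlace K → ℕ := fun w => (Finset.univ.filter fun i => InfinitePlace.mk (σs i) = w).card
  have hmsum : ∑ w, m w = k := by
    have := Finset.card_eq_sum_card_fiberwise (s := (Finset.univ : Finset (Fin k)))
      (t := (Finset.univ : Finset (InfinitePlace K))) (f := fun i => InfinitePlace.mk (σs i))
      (fun _ _ => Finset.mem_coe.2 (Finset.mem_univ _))
    simpa [m] using this.symm
  have hm0 : ∀ u : (𝓞 K)ˣ, ∑ w, (m w : ℝ) * Real.log (w ((u : 𝓞 K) : K)) = 0 := by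
    intro u
    rw [← hcon (Additive.ofMul u)]
    change _ = ∑ i, Real.log ‖σs i ((u : 𝓞 K) : K)‖
    rw [← Finset.sum_fiberwise (s := Finset.univ) (g := fun i => InfinitePlace.mk (σs i))]
    refine Finset.sum_congr rfl fun w _ => ?_
    rw [← nsmul_eq_mul]
    symm
    refine Finset.sum_eq_card_nsmul fun i hi => ?_
    rw [← (Finset.mem_filter.1 hi).2, InfinitePlace.apply]
  obtain ⟨w₁, -, hw₁⟩ := Finset.exists_min_image (Finset.univ : Finset (InfinitePlace K))
    (fun w => (m w : ℝ) / w.mult) Finset.univ_nonempty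
  set t : ℝ := (m w₁ : ℝ) / w₁.mult with ht
  have hpos : ∀ w : InfinitePlace K, (0 : ℝ) < w.mult := fun w => by
    exact_mod_cast InfinitePlace.mult_pos
  obtain ⟨u, hu⟩ := Units.dirichletUnitTheorem.exists_unit K w₁
  have hsum : ∑ w, -(((m w : ℝ) - t * w.mult) * Real.log (w ((u : 𝓞 K) : K))) = 0 := by
    have h1 := hm0 u
    have h2 := sum_mult_log_unit K u
    rw [Finset.sum_neg_distrib, neg_eq_zero]
    simp_rw [sub_mul, mul_assoc]
    rw [Finset.sum_sub_distrib, ← Finset.mul_sum, h1, h2]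
    simp
  have hw1 : (m w₁ : ℝ) - t * w₁.mult = 0 := by
    rw [ht, div_mul_cancel₀ _ (hpos w₁).ne', sub_self]
  have hnn : ∀ w, 0 ≤ (m w : ℝ) - t * w.mult := fun w => by
    have := hw₁ w (Finset.mem_univ _)
    rw [le_div_iff₀ (hpos w)] at this
    linarith
  have hall : ∀ w, (m w : ℝ) = t * w.mult := by
    intro w
    by_cases hw : w = w₁
    · subst hw
      linarith
    · have h0 := (Finset.sum_eq_zero_iff_of_nonneg (fun w _ => ?_)).1 hsum w (Finset.mem_univ _)
      · rcases mul_eq_zero.1 (neg_eq_zero.1 h0) with h | h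
        · linarith
        · exact absurd h (hu w hw).ne
      · by_cases hw : w = w₁
        · rw [hw, hw1]; simp
        · have := mul_nonneg (hnn w) (neg_nonneg.2 (hu w hw).le)
          linarith
  obtain ⟨φ⟩ := hreal
  let w₀ : InfinitePlace K := InfinitePlace.mk (Complex.ofRealHom.comp φ)
  have hw₀ : w₀.IsReal := ⟨Complex.ofRealHom.comp φ, by
    ext x
    simp [ComplexEmbedding.conjugate], rfl⟩
  have ht0 : t = m w₀ := by
    rw [hall w₀, InfinitePlace.mult, if_pos hw₀]
    simp
  have hkt : (k : ℝ) = m w₀ * finrank ℚ K := by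
    rw [← hmsum, ← InfinitePlace.sum_mult_eq]
    push_cast
    rw [Finset.mul_sum, ← ht0]
    exact Finset.sum_congr rfl fun w _ => hall w
  have hkt' : k = m w₀ * finrank ℚ K := by exact_mod_cast hkt
  rcases Nat.eq_zero_or_pos (m w₀) with h | h
  · rw [h] at hkt'
    omega
  · have := Nat.le_mul_of_pos_left (finrank ℚ K) h
    omega

/-- In a number field of degree `n` which is not totally imaginary, there exists a
`c`-hyperbolic unit for every positive `c ≤ n - 1`. -/
theorem exists_cHyperbolic_unit_of_not_totallyImaginary
    (K : Type*) [Field K] [NumberField K]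
    (hreal : Nonempty (K →+* ℝ))
    (c : ℕ) (hc : 1 ≤ c) (hcn : c ≤ finrank ℚ K - 1) :
    ∃ μ : (𝓞 K)ˣ, IsCHyperbolicUnit K c μ := by
  classical
  obtain ⟨g, hg⟩ := exists_forall_hom_ne_zero
    ((Finset.Icc 1 c).sigma fun k => (Finset.univ : Finset (Fin k → (K →+* ℂ))))
    (fun p => logHom K p.2) (by
      rintro ⟨k, σs⟩ hp
      have hk := Finset.mem_Icc.1 (Finset.mem_sigma.1 hp).1
      exact logHom_ne_zero K hreal hk.1 (by have := hk.2; dsimp only at this; omega) σs)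
  refine ⟨g.toMul, fun k hk1 hkc σs h => ?_⟩
  apply hg ⟨k, σs⟩ (Finset.mem_sigma.2 ⟨Finset.mem_Icc.2 ⟨hk1, hkc⟩, Finset.mem_univ _⟩)
  change ∑ i, Real.log ‖σs i ((g.toMul : 𝓞 K) : K)‖ = 0
  rw [← Real.log_prod (by intro i _; simp), ← norm_prod, h, Real.log_one]
end

section
/- Let K be a totally imaginary number field of degree n. Then for every positive integer c ≤ n/2 − 1 there exists a c-hyperbolic unit μ ∈ U_K. -/
open NumberField Module

/-- Finitely many nonzero additive maps to `ℝ` are simultaneously nonzero at some point. -/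
theorem exists_forall_addHom_ne_zero {G ι : Type*} [AddCommGroup G] (f : ι → G →+ ℝ)
    (s : Finset ι) (h : ∀ i ∈ s, ∃ x, f i x ≠ 0) : ∃ x, ∀ i ∈ s, f i x ≠ 0 := by
  classical
  induction s using Finset.induction_on with
  | empty => exact ⟨0, by simp⟩
  | insert a s ha ih =>
    obtain ⟨x, hx⟩ := ih fun i hi => h i (Finset.mem_insert_of_mem hi)
    obtain ⟨y, hy⟩ := h a (Finset.mem_insert_self a s)
    by_cases hax : f a x = 0
    · obtain ⟨r, ⟨n, rfl⟩, hn⟩ :=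
        (Set.infinite_range_of_injective (Nat.cast_injective (R := ℝ))).exists_notMem_finset
          (s.image fun i => -f i y / f i x)
      refine ⟨n • x + y, fun i hi => ?_⟩
      rw [map_add, map_nsmul, nsmul_eq_mul]
      rcases Finset.mem_insert.1 hi with rfl | hi
      · simpa [hax] using hy
      · intro h0
        apply hn
        refine Finset.mem_image.2 ⟨i, hi, ?_⟩
        rw [div_eq_iff (hx i hi)]
        linarith
    · refine ⟨x, fun i hi => ?_⟩
      rcases Finset.mem_insert.1 hi with rfl | hi
      · exact hax
      · exact hx i hi

theorem norm_prod_unit_ne_zero (K : Type*) [Field K] [NumberField K] {k : ℕ}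
    (σs : Fin k → (K →+* ℂ)) (μ : (𝓞 K)ˣ) : ‖∏ i, σs i ((μ : 𝓞 K) : K)‖ ≠ 0 := by
  rw [norm_ne_zero_iff, Finset.prod_ne_zero_iff]
  intro i _
  simp

/-- The additive map `μ ↦ log |∏ σᵢ(μ)|` on units. -/
noncomputable def logProdHom (K : Type*) [Field K] [NumberField K] {k : ℕ}
    (σs : Fin k → (K →+* ℂ)) : Additive (𝓞 K)ˣ →+ ℝ where
  toFun x := Real.log ‖∏ i, σs i ((x.toMul : 𝓞 K) : K)‖
  map_zero' := by simp
  map_add' x y := by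
    rw [← Real.log_mul (norm_prod_unit_ne_zero K σs _) (norm_prod_unit_ne_zero K σs _),
      ← norm_mul, ← Finset.prod_mul_distrib]
    simp

theorem exists_unit_norm_prod_lt_one (K : Type*) [Field K] [NumberField K] {k : ℕ} (hk : 1 ≤ k)
    (hkn : 2 * (k + 1) ≤ finrank ℚ K) (σs : Fin k → (K →+* ℂ)) :
    ∃ u : (𝓞 K)ˣ, ‖∏ i, σs i ((u : 𝓞 K) : K)‖ < 1 := by
  classical
  have hcard : k < Fintype.card (InfinitePlace K) := by
    have h1 := InfinitePlace.card_add_two_mul_card_eq_rank K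
    have h2 := InfinitePlace.card_eq_nrRealPlaces_add_nrComplexPlaces K
    omega
  obtain ⟨w, hw⟩ : ∃ w, ∀ i, InfinitePlace.mk (σs i) ≠ w := by
    by_contra! hcon
    have := Fintype.card_le_of_surjective (fun i => InfinitePlace.mk (σs i)) hcon
    simp at this
    omega
  obtain ⟨u, hu⟩ := Units.dirichletUnitTheorem.exists_unit K w
  refine ⟨u, ?_⟩
  have hlt : ∀ i, ‖σs i ((u : 𝓞 K) : K)‖ < 1 := by
    intro i
    have h := hu _ (hw i)
    by_contra! hge
    rw [InfinitePlace.apply] at h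
    exact absurd (Real.log_nonneg hge) (not_le.2 h)
  rw [norm_prod]
  have : Nonempty (Fin k) := ⟨⟨0, hk⟩⟩
  calc ∏ i, ‖σs i ((u : 𝓞 K) : K)‖ < ∏ _i : Fin k, (1 : ℝ) :=
        Finset.prod_lt_prod_of_nonempty (fun i _ => norm_pos_iff.2 (by simp))
          (fun i _ => hlt i) Finset.univ_nonempty
    _ = 1 := by simp

/-- In a totally imaginary number field of degree `n`, there exists a `c`-hyperbolic unit
for every positive `c ≤ n / 2 - 1`. -/
theorem exists_cHyperbolic_unit_of_totallyImaginary
    (K : Type*) [Field K] [NumberField K]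
    (him : IsEmpty (K →+* ℝ))
    (c : ℕ) (hc : 1 ≤ c) (hcn : 2 * (c + 1) ≤ finrank ℚ K) :
    ∃ μ : (𝓞 K)ˣ, IsCHyperbolicUnit K c μ := by
  classical
  obtain ⟨x, hx⟩ := exists_forall_addHom_ne_zero
    (fun p : (Σ k : Fin c, Fin (k.1 + 1) → (K →+* ℂ)) => logProdHom K p.2) Finset.univ (by
      rintro ⟨k, σs⟩ -
      obtain ⟨u, hu⟩ := exists_unit_norm_prod_lt_one K (by omega) (by omega) σs
      refine ⟨Additive.ofMul u, ne_of_lt (Real.log_neg ?_ hu)⟩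
      exact lt_of_le_of_ne (norm_nonneg _) (norm_prod_unit_ne_zero K σs u).symm)
  refine ⟨x.toMul, fun k hk hkc σs h1 => ?_⟩
  obtain ⟨k, rfl⟩ := Nat.exists_eq_add_of_le' hk
  apply hx ⟨⟨k, by omega⟩, σs⟩ (Finset.mem_univ _)
  change Real.log ‖∏ i, σs i ((x.toMul : 𝓞 K) : K)‖ = 0
  rw [h1, Real.log_one]
end

section
/- Let K be a number field of degree n which is not totally imaginary, and let c be a positive integer with c < n. Then there exists a c-hyperbolic unit μ ∈ U_K and an embedding σ₁ : K → ℝ such that |σ₁(μ)| > 1 while |σᵢ(μ)| < 1 for every other embedding σᵢ : K → ℂ (so σ₁(μ) or its inverse is, up to sign, a Pisot number). -/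
open NumberField Module

open Filter in
/-- Finitely many nonzero homomorphisms to `ℝ` can be made simultaneously nonzero, while keeping
finitely many open conditions `L w < 0`. -/
theorem avoid_aux {G ι κ : Type*} [AddCommGroup G] [Finite κ] (L : κ → G →+ ℝ)
    (l : ι → G →+ ℝ) (hl : ∀ i, ∃ v, l i v ≠ 0) (u : G) (hu : ∀ w, L w u < 0)
    (S : Finset ι) : ∃ m : G, (∀ w, L w m < 0) ∧ ∀ i ∈ S, l i m ≠ 0 := by
  classical
  induction S using Finset.induction_on with
  | empty => exact ⟨u, hu, by simp⟩
  | insert a S ha ih =>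
    obtain ⟨m, h1, h2⟩ := ih
    by_cases h : l a m = 0
    · obtain ⟨v, hv⟩ := hl a
      have key : ∀ x y : ℝ, x < 0 → ∀ᶠ N : ℕ in atTop, (N : ℝ) * x + y < 0 := by
        intro x y hx
        have ht : Tendsto (fun N : ℕ => (N : ℝ) * x + y) atTop atBot :=
          tendsto_atBot_add_const_right _ _
            (tendsto_natCast_atTop_atTop.atTop_mul_const_of_neg hx)
        exact ht.eventually (eventually_lt_atBot 0)
      have e1 : ∀ᶠ N : ℕ in atTop, ∀ w, L w (N • m + v) < 0 := by
        rw [eventually_all]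
        intro w
        filter_upwards [key (L w m) (L w v) (h1 w)] with N hN
        simpa using hN
      have e2 : ∀ᶠ N : ℕ in atTop, ∀ i ∈ S, l i (N • m + v) ≠ 0 := by
        rw [Filter.eventually_all_finset]
        intro i hi
        rcases lt_or_gt_of_ne (h2 i hi) with h3 | h3
        · filter_upwards [key (l i m) (l i v) h3] with N hN
          simpa using hN.ne
        · filter_upwards [key (-l i m) (-l i v) (by linarith)] with N hN
          have : 0 < (N : ℝ) * l i m + l i v := by linarith
          simpa using this.ne'
      obtain ⟨N, hN1, hN2⟩ := (e1.and e2).exists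
      refine ⟨N • m + v, hN1, ?_⟩
      intro i hi
      rcases Finset.mem_insert.mp hi with rfl | hi
      · simpa [h] using hv
      · exact hN2 i hi
    · refine ⟨m, h1, ?_⟩
      intro i hi
      rcases Finset.mem_insert.mp hi with rfl | hi
      · exact h
      · exact h2 i hi

/-- The logarithm of the absolute value at an embedding, as a homomorphism on units. -/
noncomputable def logHomAux (K : Type*) [Field K] [NumberField K] (σ : K →+* ℂ) :
    Additive (𝓞 K)ˣ →+ ℝ where
  toFun v := Real.log ‖σ ((v.toMul : 𝓞 K) : K)‖
  map_zero' := by simp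
  map_add' x y := by
    simp [Real.log_mul]

theorem logHomAux_apply (K : Type*) [Field K] [NumberField K] (σ : K →+* ℂ) (v : (𝓞 K)ˣ) :
    logHomAux K σ (Additive.ofMul v) = Real.log (InfinitePlace.mk σ ((v : 𝓞 K) : K)) := rfl

open InfinitePlace in
theorem nonvanish_aux (K : Type*) [Field K] [NumberField K] (w₁ : InfinitePlace K)
    (hw₁ : w₁.mult = 1) (k : ℕ) (hk : 1 ≤ k) (hkn : k < finrank ℚ K)
    (σs : Fin k → (K →+* ℂ)) :
    ∃ v, (∑ i, logHomAux K (σs i)) v ≠ 0 := by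
  classical
  by_contra! hcon
  let a : InfinitePlace K → ℕ := fun w => (Finset.univ.filter (fun i => mk (σs i) = w)).card
  have hmult : ∀ w : InfinitePlace K, (0 : ℝ) < w.mult := fun w => by
    exact_mod_cast mult_pos
  have hsum : ∀ v : (𝓞 K)ˣ, ∑ w, (a w : ℝ) * Real.log (w ((v : 𝓞 K) : K)) = 0 := by
    intro v
    rw [← hcon (Additive.ofMul v), AddMonoidHom.finsetSum_apply]
    simp_rw [logHomAux_apply]
    rw [← Finset.sum_fiberwise Finset.univ (fun i => mk (σs i))]
    refine Finset.sum_congr rfl fun w _ => ?_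
    rw [Finset.sum_congr rfl (g := fun _ => Real.log (w ((v : 𝓞 K) : K)))]
    · simp [a]
    · intro i hi
      rw [(Finset.mem_filter.mp hi).2]
  have hcard : ∑ w, a w = k := by
    have := Finset.card_eq_sum_card_fiberwise (s := (Finset.univ : Finset (Fin k)))
      (t := (Finset.univ : Finset (InfinitePlace K))) (f := fun i => mk (σs i)) (by simp)
    simpa [a] using this.symm
  obtain ⟨w', -, hmin⟩ := Finset.exists_min_image (Finset.univ : Finset (InfinitePlace K))
    (fun w => (a w : ℝ) / w.mult) ⟨w₁, Finset.mem_univ _⟩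
  obtain ⟨u, hu⟩ := Units.dirichletUnitTheorem.exists_unit K w'
  set t : ℝ := (a w' : ℝ) / w'.mult with ht
  have hz : ∑ w : InfinitePlace K, ((a w : ℝ) - t * w.mult) * Real.log (w ((u : 𝓞 K) : K)) = 0 := by
    simp_rw [sub_mul, mul_assoc]
    rw [Finset.sum_sub_distrib, hsum u, ← Finset.mul_sum, Units.sum_mult_mul_log]
    simp
  have hnn : ∀ w : InfinitePlace K, 0 ≤ (a w : ℝ) - t * w.mult := by
    intro w
    have := hmin w (Finset.mem_univ _)
    rw [le_div_iff₀ (hmult w)] at this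
    linarith
  have hw' : (a w' : ℝ) - t * w'.mult = 0 := by
    rw [ht, div_mul_cancel₀ _ (hmult w').ne', sub_self]
  have hall : ∀ w : InfinitePlace K, (a w : ℝ) = t * w.mult := by
    intro w
    by_cases hw : w = w'
    · subst hw; linarith
    · have := (Finset.sum_eq_zero_iff_of_nonpos ?_).mp hz w (Finset.mem_univ _)
      · rcases mul_eq_zero.mp this with h | h
        · linarith
        · exact absurd h (hu w hw).ne
      · intro x _
        by_cases hx : x = w'
        · subst hx; rw [hw', zero_mul]
        · exact mul_nonpos_of_nonneg_of_nonpos (hnn x) (hu x hx).le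
  have ht1 : (a w₁ : ℝ) = t := by rw [hall w₁, hw₁]; simp
  have hfin : a w₁ * finrank ℚ K = k := by
    rw [← hcard, ← sum_mult_eq, Finset.mul_sum]
    refine Finset.sum_congr rfl fun w _ => ?_
    have := hall w
    rw [← ht1] at this
    exact_mod_cast this.symm
  rcases Nat.eq_zero_or_pos (a w₁) with h | h
  · rw [h] at hfin; omega
  · have := Nat.le_mul_of_pos_left (finrank ℚ K) h
    omega

open InfinitePlace in
/-- In a number field of degree `n` which is not totally imaginary, for every positive
`c < n` there is a `c`-hyperbolic unit `μ` which, under one fixed real embedding, has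
absolute value `> 1`, while all other embeddings take value of absolute value `< 1`. -/
theorem exists_cHyperbolic_pisot_unit
    (K : Type*) [Field K] [NumberField K]
    (hreal : Nonempty (K →+* ℝ))
    (c : ℕ) (hc : 1 ≤ c) (hcn : c < finrank ℚ K) :
    ∃ (μ : (𝓞 K)ˣ) (σ₁ : K →+* ℝ),
      IsCHyperbolicUnit K c μ ∧
      1 < |σ₁ ((μ : 𝓞 K) : K)| ∧
      ∀ σ : K →+* ℂ, σ ≠ Complex.ofRealHom.comp σ₁ →
        ‖σ ((μ : 𝓞 K) : K)‖ < 1 := by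
  classical
  obtain ⟨σ₁⟩ := hreal
  set τ : K →+* ℂ := Complex.ofRealHom.comp σ₁ with hτ
  have hτr : ComplexEmbedding.IsReal τ := by
    ext x
    simp [hτ]
  have hw₁ : (mk τ).mult = 1 := mult_isReal ⟨mk τ, ⟨τ, hτr, rfl⟩⟩
  have hne : ∀ σ : K →+* ℂ, σ ≠ τ → mk σ ≠ mk τ := by
    intro σ hσ h
    rcases mk_eq_iff.mp h with h | h
    · exact hσ h
    · apply hσ
      rw [← star_star σ]
      exact (congrArg star h).trans hτr
  obtain ⟨u, hu⟩ := Units.dirichletUnitTheorem.exists_unit K (mk τ)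
  obtain ⟨m, hm1, hm2⟩ := avoid_aux
    (fun σ : {σ : K →+* ℂ // σ ≠ τ} => logHomAux K σ.1)
    (fun s : (Σ k : Fin c, Fin (k.1 + 1) → (K →+* ℂ)) => ∑ i, logHomAux K (s.2 i))
    (fun s => nonvanish_aux K (mk τ) hw₁ _ (by omega) (by have := s.1.2; omega) s.2)
    (Additive.ofMul u) (fun σ => hu _ (hne σ.1 σ.2)) Finset.univ
  obtain ⟨μ, rfl⟩ := Additive.ofMul.surjective m
  have hyp : IsCHyperbolicUnit K c μ := by
    intro k hk hkc σs h
    obtain ⟨j, rfl⟩ : ∃ j, k = j + 1 := ⟨k - 1, by omega⟩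
    refine hm2 ⟨⟨j, by omega⟩, σs⟩ (Finset.mem_univ _) ?_
    rw [AddMonoidHom.finsetSum_apply]
    change ∑ i, Real.log ‖σs i ((μ : 𝓞 K) : K)‖ = 0
    rw [← Real.log_prod (fun i _ => by simp), ← norm_prod, h, Real.log_one]
  have hlt : ∀ σ : K →+* ℂ, σ ≠ τ → ‖σ ((μ : 𝓞 K) : K)‖ < 1 := by
    intro σ hσ
    have h : Real.log ‖σ ((μ : 𝓞 K) : K)‖ < 0 := hm1 ⟨σ, hσ⟩
    exact (Real.log_neg_iff (by simp)).mp h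
  refine ⟨μ, σ₁, hyp, ?_, hlt⟩
  have hn : ‖τ ((μ : 𝓞 K) : K)‖ = |σ₁ ((μ : 𝓞 K) : K)| := by
    simp [hτ]
  rw [← hn]
  have hne1 : ‖τ ((μ : 𝓞 K) : K)‖ ≠ 1 := by
    simpa using hyp 1 le_rfl hc (fun _ => τ)
  refine lt_of_le_of_ne ?_ hne1.symm
  by_contra! hlt1
  have hall : ∀ w : InfinitePlace K, w ((μ : 𝓞 K) : K) < 1 := by
    intro w
    rw [← mk_embedding w]
    change ‖w.embedding ((μ : 𝓞 K) : K)‖ < 1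
    by_cases h : w.embedding = τ
    · rw [h]; exact hlt1
    · exact hlt _ h
  have hs := Units.sum_mult_mul_log μ
  have : ∑ w : InfinitePlace K, (w.mult : ℝ) * Real.log (w ((μ : 𝓞 K) : K)) < 0 := by
    refine Finset.sum_neg (fun w _ => ?_) ⟨mk τ, Finset.mem_univ _⟩
    refine mul_neg_of_pos_of_neg (by exact_mod_cast mult_pos) ?_
    exact Real.log_neg (Units.pos_at_place μ w) (hall w)
  exact absurd hs this.ne
end

section
/- Let ℚ ⊆ F be a finite degree field extension (F a subfield of ℂ) and let m be a positive integer. Then there exists a field extension F ⊆ E ⊆ ℂ such that E is Galois over F and [E : F] = m. Moreover, if F ⊆ ℝ, then E can be chosen so that E is not totally imaginary (E admits an embedding into ℝ). -/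
open Module

lemma aux_group {G : Type*} [Group G] [Finite G] [IsCyclic G] (m : ℕ)
    (h : 2 * m ∣ Nat.card G) :
    ∃ H : Subgroup G, H.Normal ∧ H.index = m ∧ ∀ g : G, g ^ 2 = 1 → g ∈ H := by
  let _ : CommGroup G := IsCyclic.commGroup
  obtain ⟨k, hk⟩ := h
  have hpos : 0 < Nat.card G := Nat.card_pos
  have hk0 : 0 < 2 * k := by
    rcases Nat.eq_zero_or_pos k with rfl | h
    · simp at hk; omega
    · omega
  have hk' : Nat.card G = m * (2 * k) := by rw [hk]; ring
  refine ⟨(powMonoidHom (2 * k) : G →* G).ker, inferInstance, ?_, ?_⟩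
  · rw [IsCyclic.index_powMonoidHom_ker, hk', Nat.gcd_eq_right (Dvd.intro_left _ rfl),
      Nat.mul_div_cancel _ hk0]
  · intro g hg
    rw [MonoidHom.mem_ker, powMonoidHom_apply, pow_mul, hg, one_pow]

noncomputable def zt (p : ℕ) : ℂ := Complex.exp (2 * Real.pi * Complex.I / p)

lemma zt_prim (p : ℕ) (hp : p ≠ 0) : IsPrimitiveRoot (zt p) p :=
  Complex.isPrimitiveRoot_exp p hp

open IntermediateField in
lemma zt_cyc (K : Type*) [Field K] [Algebra K ℂ] (p : ℕ) [NeZero p] :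
    IsCyclotomicExtension {p} K K⟮zt p⟯ :=
  (IntermediateField.isCyclotomicExtension_singleton_iff_eq_adjoin p _ _ _
    (zt_prim p (NeZero.ne p))).2 rfl

open IntermediateField in
lemma zt_finrank {K : Type*} [Field K] [Algebra K ℂ] [CharZero K]
    (irr : ∀ n : ℕ, 0 < n → Irreducible (Polynomial.cyclotomic n K)) (p : ℕ) [NeZero p] : finrank K K⟮zt p⟯ = p.totient := by
  have := zt_cyc K p
  exact IsCyclotomicExtension.finrank (n := p) _ (irr _ (NeZero.pos p))

open IntermediateField in
lemma zt_inf {K : Type*} [Field K] [Algebra K ℂ] [CharZero K]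
    (irr : ∀ n : ℕ, 0 < n → Irreducible (Polynomial.cyclotomic n K)) (p q : ℕ) [NeZero p] [NeZero q] (h : p.Coprime q) : K⟮zt p⟯ ⊓ K⟮zt q⟯ = ⊥ := by
  have := zt_cyc K p
  have := zt_cyc K q
  have : FiniteDimensional K K⟮zt p⟯ := IsCyclotomicExtension.finite_of_singleton p K _
  have : FiniteDimensional K K⟮zt q⟯ := IsCyclotomicExtension.finite_of_singleton q K _
  apply LinearDisjoint.inf_eq_bot
  apply LinearDisjoint.of_finrank_sup
  have h3 := IntermediateField.isCyclotomicExtension_lcm_sup (n₁ := p) (n₂ := q) K ℂ K⟮zt p⟯ K⟮zt q⟯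
  rw [h.lcm_eq_mul] at h3
  rw [zt_finrank irr, zt_finrank irr, ← Nat.totient_mul h]
  exact IsCyclotomicExtension.finrank (n := p * q) _
    (irr _ (NeZero.pos (p * q)))

open IntermediateField in
lemma exists_p {K : Type*} [Field K] [Algebra K ℂ] [CharZero K]
    (irr : ∀ n : ℕ, 0 < n → Irreducible (Polynomial.cyclotomic n K)) (F : IntermediateField K ℂ) [FiniteDimensional K F] (k : ℕ) (hk : k ≠ 0) :
    ∃ p : ℕ, p.Prime ∧ p ≡ 1 [MOD k] ∧ K⟮zt p⟯ ⊓ F = ⊥ := by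
  by_contra! hc
  have hfin : Finite (IntermediateField K F) :=
    Field.finite_intermediateField_of_exists_primitive_element _ _
      (Field.exists_primitive_element K F)
  have hinf := Nat.infinite_setOfPred_prime_modEq_one hk
  have : Infinite {p : ℕ | Nat.Prime p ∧ p ≡ 1 [MOD k]} := hinf.to_subtype
  obtain ⟨⟨p, hp⟩, ⟨q, hq⟩, hne, heq⟩ := Finite.exists_ne_map_eq_of_infinite
    (fun p : {p : ℕ | Nat.Prime p ∧ p ≡ 1 [MOD k]} =>
      IntermediateField.restrict (inf_le_right : K⟮zt p⟯ ⊓ F ≤ F))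
  have hne' : p ≠ q := fun h => hne (by simp [h])
  have : NeZero p := ⟨hp.1.ne_zero⟩
  have : NeZero q := ⟨hq.1.ne_zero⟩
  have h2 := congrArg IntermediateField.lift heq
  simp only [IntermediateField.lift_restrict] at h2
  have h3 := zt_inf irr p q ((Nat.coprime_primes hp.1 hq.1).2 hne')
  apply hc p hp.1 hp.2
  rw [eq_bot_iff, ← h3]
  exact le_inf inf_le_left (h2.le.trans inf_le_left)

open IntermediateField in
lemma zt_finrank_F {K : Type*} [Field K] [Algebra K ℂ] [CharZero K]
    (irr : ∀ n : ℕ, 0 < n → Irreducible (Polynomial.cyclotomic n K)) (F : IntermediateField K ℂ) [FiniteDimensional K F] (p : ℕ) [NeZero p]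
    (h : K⟮zt p⟯ ⊓ F = ⊥) : finrank F F⟮zt p⟯ = p.totient := by
  have := zt_cyc K p
  have : FiniteDimensional K K⟮zt p⟯ := IsCyclotomicExtension.finite_of_singleton p K _
  have : IsGalois K K⟮zt p⟯ := IsCyclotomicExtension.isGalois {p} K _
  have hd : (K⟮zt p⟯).LinearDisjoint F := LinearDisjoint.of_inf_eq_bot h
  have hr := hd.adjoin_rank_eq_rank_left_of_isAlgebraic_left
  have he : adjoin F (K⟮zt p⟯ : Set ℂ) = F⟮zt p⟯ := by
    apply le_antisymm
    · rw [adjoin_le_iff]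
      have : K⟮zt p⟯ ≤ (F⟮zt p⟯).restrictScalars K := by
        rw [adjoin_simple_le_iff]
        exact mem_adjoin_simple_self F (zt p)
      exact this
    · rw [adjoin_simple_le_iff]
      exact subset_adjoin _ _ (mem_adjoin_simple_self K (zt p))
  rw [he] at hr
  rw [← zt_finrank irr, finrank, finrank, hr]

open IntermediateField in
lemma main_aux {K : Type*} [Field K] [Algebra K ℂ] [CharZero K]
    (irr : ∀ n : ℕ, 0 < n → Irreducible (Polynomial.cyclotomic n K)) (F : IntermediateField K ℂ) [FiniteDimensional K F]
    (m : ℕ) (hm : 0 < m) :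
    ∃ E : IntermediateField F ℂ, IsGalois F E ∧ finrank F E = m ∧
      ∀ c : ℂ ≃ₐ[F] ℂ, c ^ 2 = 1 → ∀ x ∈ E, c x = x := by
  obtain ⟨p, hp, hpm, hd⟩ := exists_p irr F (2 * m) (by omega)
  have : Fact p.Prime := ⟨hp⟩
  have : NeZero p := ⟨hp.ne_zero⟩
  have hr := zt_finrank_F irr F p hd
  have := zt_cyc F p
  have : FiniteDimensional F F⟮zt p⟯ := IsCyclotomicExtension.finite_of_singleton p F _
  have : IsGalois F F⟮zt p⟯ := IsCyclotomicExtension.isGalois {p} F _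
  have hcyc : IsCyclic Gal(F⟮zt p⟯/F) :=
    isCyclic_of_injective _ (IsPrimitiveRoot.autToPow_injective (K := F)
      (IsCyclotomicExtension.zeta_spec p F F⟮zt p⟯))
  have hcard : Nat.card Gal(F⟮zt p⟯/F) = p - 1 := by
    rw [IsGalois.card_aut_eq_finrank, hr, Nat.totient_prime hp]
  obtain ⟨H, hH, hi, hmem⟩ := aux_group (G := Gal(F⟮zt p⟯/F)) m (by
    rw [hcard]; exact (Nat.modEq_iff_dvd' hp.pos).1 hpm.symm)
  refine ⟨IntermediateField.lift (fixedField H), ?_, ?_, ?_⟩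
  · exact IsGalois.of_algEquiv (liftAlgEquiv (fixedField H))
  · rw [← (liftAlgEquiv (fixedField H)).toLinearEquiv.finrank_eq,
      finrank_eq_fixingSubgroup_index, fixingSubgroup_fixedField, hi]
  · intro c hc x hx
    have hxz : x ∈ F⟮zt p⟯ := lift_le _ hx
    have hx2 : (⟨x, hxz⟩ : F⟮zt p⟯) ∈ fixedField H := (mem_lift (⟨x, hxz⟩ : F⟮zt p⟯)).1 hx
    have hcm : AlgEquiv.restrictNormalHom F⟮zt p⟯ c ∈ H := by
      apply hmem
      rw [← map_pow, hc, map_one]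
    have h1 := (mem_fixedField_iff _ _).1 hx2 _ hcm
    have h2 := AlgEquiv.restrictNormal_commutes c F⟮zt p⟯ ⟨x, hxz⟩
    have h3 : c.restrictNormal F⟮zt p⟯ ⟨x, hxz⟩ = ⟨x, hxz⟩ := h1
    rw [h3] at h2
    exact h2.symm


/-- For every finite extension `F` of `ℚ` (inside `ℂ`) and every positive integer `m`,
there is a Galois extension `E` of `F` of degree `m`; moreover, if `F ⊆ ℝ`, then `E` can
be chosen to be not totally imaginary, i.e. to admit an embedding into `ℝ`. -/
theorem exists_galois_extension_of_degree
    (F : IntermediateField ℚ ℂ) [FiniteDimensional ℚ F]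
    (m : ℕ) (hm : 0 < m) :
    (∃ E : IntermediateField F ℂ, IsGalois F E ∧ finrank F E = m) ∧
    ((∀ x : F, ∃ r : ℝ, (x : ℂ) = (r : ℂ)) →
      ∃ E : IntermediateField F ℂ, IsGalois F E ∧ finrank F E = m ∧
        Nonempty (E →+* ℝ)) := by
  obtain ⟨E, hG, hf, hc⟩ := main_aux
    (fun n hn => Polynomial.cyclotomic.irreducible_rat hn) F m hm
  refine ⟨⟨E, hG, hf⟩, fun hF => ⟨E, hG, hf, ?_⟩⟩
  let c : ℂ ≃ₐ[F] ℂ := AlgEquiv.ofRingEquiv (f := (starRingAut : ℂ ≃+* ℂ)) (by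
    intro x
    obtain ⟨r, hr⟩ := hF x
    change (starRingEnd ℂ) (x : ℂ) = (x : ℂ)
    rw [hr, Complex.conj_ofReal])
  have hcc : c ^ 2 = 1 := by
    ext x
    rw [pow_two]
    exact Complex.conj_conj x
  have him : ∀ x : E, (x : ℂ).im = 0 := fun x =>
    Complex.conj_eq_iff_im.1 (hc c hcc x x.2)
  exact ⟨{ toFun := fun x => (x : ℂ).re
           map_one' := by simp
           map_zero' := by simp
           map_add' := by simp
           map_mul' := by intro x y; simp [him] }⟩
end
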